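/- arXiv:2506.22428 — 2 statements merged into one kernel-verified Lean document; each statement's English description precedes it below -/
import Mathlib

section
/- For an IPPA sequence on a proper, convex, lower semicontinuous function h with errors and step sizes satisfying (A1)–(A5), if there exists λ̄ ∈ Y with s̄ ∈ ∂h(λ̄) (equivalently, h* is subdifferentiable at s̄), then the conjugate values along the exact proximal subgradients converge at rate |h*(s⋆^k) − h*(s̄)| = O(1/√(∑_{i=0}^{k−1} γ_i)), where s̄ is the element of minimal norm in cl(range ∂h). -/
open scoped RealInnerProductSpace
open Filter Asymptotics

noncomputable section

/-- The Fenchel conjugate of an `EReal`-valued function on a real inner product space. -/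
def fenchel {Y : Type*} [NormedAddCommGroup Y] [InnerProductSpace ℝ Y]
    (h : Y → EReal) (s : Y) : EReal :=
  ⨆ l : Y, ((⟪s, l⟫ : ℝ) : EReal) - h l

/-- The convex subdifferential of an `EReal`-valued function: `v ∈ ∂h(u)` iff
`h w ≥ h u + ⟪v, w − u⟫` for all `w`. -/
def subdiff {Y : Type*} [NormedAddCommGroup Y] [InnerProductSpace ℝ Y]
    (h : Y → EReal) (u : Y) : Set Y :=
  {v : Y | ∀ w : Y, h u + ((⟪v, w - u⟫ : ℝ) : EReal) ≤ h w}

/-!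
Put `σ n = ∑ i < n, γ i`. Minimality of `s̄` in the convex set `cl (range ∂h)` says that
`⟪v - s̄, s̄⟫ ≥ 0` for every subgradient `v`. Hence, if `s̄ ∈ ∂h(λ̄)`, the drifted iterates
`λ^k + σ k • s̄` are quasi-Fejér with respect to `λ̄` and stay bounded. The energy
`σ k * (‖s⋆^k‖² - ‖s̄‖²) + 2 * (h(λ⋆^k) - ⟪s̄, λ⋆^k⟫)` is bounded below and increases by at most a
summable amount at each step, so `‖s⋆^k - s̄‖² ≤ ‖s⋆^k‖² - ‖s̄‖² = O(1 / σ k)`. Finally `λ⋆^k` and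
`λ̄` are subgradients of `h*` at `s⋆^k` and `s̄`, and since `⟪s⋆^k - s̄, s̄⟫ ≥ 0` the unbounded
`λ⋆^k` may be replaced by the bounded `λ⋆^k + σ k • s̄` in the resulting estimate.
-/

/-! ### Real sequences and extended reals -/

theorem add_coe_le_coe_iff {x : EReal} {q a : ℝ} :
    x + (q : EReal) ≤ (a : EReal) ↔ x ≤ ((a - q : ℝ) : EReal) := by
  induction x with
  | bot => simp
  | top => simp [-EReal.coe_sub]
  | coe r => norm_cast; exact le_sub_iff_add_le.symm

theorem coe_sub_le_coe_iff {x : EReal} {q a : ℝ} :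
    (q : EReal) - x ≤ (a : EReal) ↔ ((q - a : ℝ) : EReal) ≤ x := by
  induction x with
  | bot => simp [-EReal.coe_sub]
  | top => simp
  | coe r => norm_cast; exact sub_le_comm

theorem nonpos_of_forall_le_mul {A B : ℝ} (hAB : ∀ t ∈ Set.Ioc (0 : ℝ) 1, A ≤ t * B) : A ≤ 0 := by
  have hlim : Tendsto (fun t : ℝ => t * B) (nhdsWithin 0 (Set.Ioi 0)) (nhds (0 * B)) :=
    ((continuous_id.mul continuous_const).tendsto 0).mono_left nhdsWithin_le_nhds
  rw [zero_mul] at hlim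
  exact ge_of_tendsto hlim (eventually_of_mem (Ioc_mem_nhdsGT one_pos) hAB)

theorem bddAbove_range_of_le_add_summable {a δ : ℕ → ℝ} (hδ : Summable δ)
    (ha : ∀ n, a (n + 1) ≤ a n + δ n) : BddAbove (Set.range a) := by
  obtain ⟨D, hD⟩ := hδ.hasSum.tendsto_sum_nat.bddAbove_range
  refine ⟨a 0 + D, Set.forall_mem_range.2 fun n => ?_⟩
  have hsum : a n - a 0 ≤ ∑ i ∈ Finset.range n, δ i := by
    rw [← Finset.sum_range_sub]
    exact Finset.sum_le_sum fun i _ => sub_le_iff_le_add'.2 (ha i)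
  linarith [hD ⟨n, rfl⟩]

theorem summable_of_summable_mul {f w : ℕ → ℝ} {c : ℝ} (hc : 0 < c) (hw : ∀ n, c ≤ w n)
    (hf : Summable fun n => f n * w n) : Summable f := by
  refine Summable.of_norm_bounded (hf.abs.mul_left c⁻¹) fun n => ?_
  rw [Real.norm_eq_abs, abs_mul, inv_mul_eq_div, le_div_iff₀ hc]
  exact mul_le_mul_of_nonneg_left ((hw n).trans (le_abs_self _)) (abs_nonneg _)

theorem summable_sq_mul_of_summable_mul {f w : ℕ → ℝ} {c : ℝ} (hc : 0 < c) (hw : ∀ n, c ≤ w n)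
    (hf : Summable fun n => f n * w n) : Summable fun n => f n ^ 2 * w n := by
  have hlim := (summable_of_summable_mul hc hw hf).tendsto_cofinite_zero
  have hprod := Summable.mul_tendsto_const (f := fun n => f n * w n) hf.norm hlim
  exact hprod.congr fun n => by ring

/-! ### Minimizers of uniformly convex functions -/

theorem exists_forall_le_of_midpoint_add_le {E : Type*} [NormedAddCommGroup E] [NormedSpace ℝ E]
    [CompleteSpace E] {φ : E → EReal} {c B : ℝ} (hlsc : LowerSemicontinuous φ)
    (hB : ∀ x, (B : EReal) ≤ φ x) (htop : ∃ x, φ x ≠ ⊤) (hc : 0 < c)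
    (hmid : ∀ (x y : E) (a : ℝ), φ x ≤ a → φ y ≤ a →
      φ (midpoint ℝ x y) + ((c * ‖x - y‖ ^ 2 : ℝ) : EReal) ≤ a) :
    ∃ p, ∀ x, φ p ≤ φ x := by
  obtain ⟨m, hm⟩ : ∃ m : ℝ, ⨅ x, φ x = m := by
    obtain ⟨x, hx⟩ := htop
    refine ⟨_, (EReal.coe_toReal (ne_top_of_le_ne_top hx (iInf_le _ x)) ?_).symm⟩
    exact ((EReal.bot_lt_coe B).trans_le (le_iInf hB)).ne'
  have hmin (x : E) : (m : EReal) ≤ φ x := hm ▸ iInf_le φ x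
  have hlevel (n : ℕ) : ∃ x, φ x ≤ ((m + 1 / ((n : ℝ) + 1) : ℝ) : EReal) := by
    have hlt : ⨅ x, φ x < ((m + 1 / ((n : ℝ) + 1) : ℝ) : EReal) := by
      rw [hm, EReal.coe_lt_coe_iff]
      exact lt_add_of_pos_right m Nat.one_div_pos_of_nat
    exact (iInf_lt_iff.1 hlt).imp fun x hx => hx.le
  choose y hy using hlevel
  have hy_le {n N : ℕ} (hn : N ≤ n) : φ (y n) ≤ ((m + 1 / ((N : ℝ) + 1) : ℝ) : EReal) :=
    (hy n).trans (EReal.coe_le_coe_iff.2 (by gcongr))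
  have hcauchy : CauchySeq y := by
    refine cauchySeq_of_le_tendsto_0 (fun N : ℕ => √(1 / ((N : ℝ) + 1) / c))
      (fun i j N hi hj => ?_) ?_
    · have hmid_ij := hmid _ _ _ (hy_le hi) (hy_le hj)
      have hgap := (add_le_add_left (hmin _) _).trans hmid_ij
      have hgap_real : m + c * ‖y i - y j‖ ^ 2 ≤ m + 1 / ((N : ℝ) + 1) := by exact_mod_cast hgap
      rw [dist_eq_norm]
      refine Real.le_sqrt_of_sq_le ((le_div_iff₀ hc).2 ?_)
      linarith
    · simpa using (tendsto_one_div_add_atTop_nhds_zero_nat.div_const c).sqrt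
  obtain ⟨p, hp⟩ := cauchySeq_tendsto_of_complete hcauchy
  have hp_le (N : ℕ) : φ p ≤ ((m + 1 / ((N : ℝ) + 1) : ℝ) : EReal) :=
    (hlsc.isClosed_preimage _).mem_of_tendsto hp
      ((eventually_ge_atTop N).mono fun _ hn => hy_le hn)
  have hlim : Tendsto (fun N : ℕ => ((m + 1 / ((N : ℝ) + 1) : ℝ) : EReal)) atTop (nhds m) := by
    refine (continuous_coe_real_ereal.tendsto m).comp ?_
    simpa using tendsto_one_div_add_atTop_nhds_zero_nat.const_add m
  exact ⟨p, fun x => (ge_of_tendsto' hlim hp_le).trans (hmin x)⟩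

/-! ### Subgradients, conjugates and proximal points -/

section ConvexAnalysis

/-- Properness of an extended-real-valued function: it never takes the value `⊥` and is not
identically `⊤`. -/
structure IsProper {X : Type*} (h : X → EReal) : Prop where
  ne_bot : ∀ u, h u ≠ ⊥
  exists_ne_top : ∃ u, h u ≠ ⊤

theorem IsProper.coe_toReal {X : Type*} {h : X → EReal} (hh : IsProper h) {u : X} (hu : h u ≠ ⊤) :
    ((h u).toReal : EReal) = h u :=
  EReal.coe_toReal hu (hh.ne_bot u)

/-- Convexity of an extended-real-valued function, with the `EReal` convention `0 * ⊤ = 0`. -/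
def IsConvex {X : Type*} [AddCommMonoid X] [Module ℝ X] (h : X → EReal) : Prop :=
  ∀ u v : X, ∀ a b : ℝ, 0 ≤ a → 0 ≤ b → a + b = 1 →
    h (a • u + b • v) ≤ (a : EReal) * h u + (b : EReal) * h v

theorem IsConvex.le_of_le {X : Type*} [AddCommMonoid X] [Module ℝ X] {h : X → EReal}
    (hcvx : IsConvex h) {u v : X} {a b q r : ℝ} (ha : 0 ≤ a) (hb : 0 ≤ b) (hab : a + b = 1)
    (hu : h u ≤ q) (hv : h v ≤ r) : h (a • u + b • v) ≤ ((a * q + b * r : ℝ) : EReal) := by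
  push_cast
  exact (hcvx u v a b ha hb hab).trans <| add_le_add
    (mul_le_mul_of_nonneg_left hu (EReal.coe_nonneg.2 ha))
    (mul_le_mul_of_nonneg_left hv (EReal.coe_nonneg.2 hb))

variable {Y : Type*} [NormedAddCommGroup Y] {h : Y → EReal} {u v w x p s sbar : Y} {g : ℝ}

/-- `p` is a proximal point of `h` at `x` with step `g`, i.e. a minimizer of
`μ ↦ h μ + ‖x - μ‖ ^ 2 / (2 * g)`. -/
def IsProx (h : Y → EReal) (g : ℝ) (x p : Y) : Prop :=
  ∀ μ : Y, h p + ((‖x - p‖ ^ 2 / (2 * g) : ℝ) : EReal)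
    ≤ h μ + ((‖x - μ‖ ^ 2 / (2 * g) : ℝ) : EReal)

theorem IsProx.le_coe (hp : IsProx h g x p) {a : ℝ} (hu : h u ≤ a) :
    h p ≤ ((a + ‖x - u‖ ^ 2 / (2 * g) - ‖x - p‖ ^ 2 / (2 * g) : ℝ) : EReal) := by
  rw [← add_coe_le_coe_iff, EReal.coe_add]
  exact (hp u).trans (add_le_add_left hu _)

theorem IsProx.ne_top (hp : IsProx h g x p) (htop : ∃ u, h u ≠ ⊤) : h p ≠ ⊤ := by
  obtain ⟨u, hu⟩ := htop
  exact ne_top_of_le_ne_top (EReal.coe_ne_top _) (hp.le_coe (EReal.le_coe_toReal hu))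

variable [InnerProductSpace ℝ Y]

/-- The real-valued tilt `u ↦ h u - ⟪s, u⟫` of `h` by a linear functional; it is meaningful only
where `h` is finite. -/
def tilt (h : Y → EReal) (s u : Y) : ℝ := (h u).toReal - ⟪s, u⟫

theorem ne_top_of_mem_subdiff (htop : ∃ w, h w ≠ ⊤) (hv : v ∈ subdiff h u) : h u ≠ ⊤ := by
  intro hu
  obtain ⟨w, hw⟩ := htop
  have hle := hv w
  rw [hu, EReal.top_add_coe, top_le_iff] at hle
  exact hw hle

theorem inner_sub_le_tilt_sub_tilt (hh : IsProper h) (hv : v ∈ subdiff h u) (hw : h w ≠ ⊤) (s : Y) :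
    ⟪v - s, w - u⟫ ≤ tilt h s w - tilt h s u := by
  have hle := hv w
  rw [← hh.coe_toReal hw, ← hh.coe_toReal (ne_top_of_mem_subdiff hh.exists_ne_top hv)] at hle
  have hle_real : (h u).toReal + ⟪v, w - u⟫ ≤ (h w).toReal := by exact_mod_cast hle
  rw [inner_sub_left, inner_sub_right s, tilt, tilt]
  linarith

theorem tilt_le_tilt_of_mem_subdiff (hh : IsProper h) (hv : v ∈ subdiff h u) (hw : h w ≠ ⊤) :
    tilt h v u ≤ tilt h v w := by
  simpa using inner_sub_le_tilt_sub_tilt hh hv hw v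

theorem inner_sub_sub_nonneg_of_mem_subdiff (hh : IsProper h) (hv : v ∈ subdiff h u)
    (hw : s ∈ subdiff h w) : 0 ≤ ⟪v - s, u - w⟫ := by
  have hle := inner_sub_le_tilt_sub_tilt hh hv (ne_top_of_mem_subdiff hh.exists_ne_top hw) s
  have hmin := tilt_le_tilt_of_mem_subdiff hh hw (ne_top_of_mem_subdiff hh.exists_ne_top hv)
  rw [← neg_sub u w, inner_neg_right] at hle
  linarith

theorem fenchel_le_coe_iff {C : ℝ} :
    fenchel h w ≤ C ↔ ∀ l, ((⟪w, l⟫ - C : ℝ) : EReal) ≤ h l := by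
  simp only [fenchel, iSup_le_iff, coe_sub_le_coe_iff]

theorem fenchel_eq_of_mem_subdiff (hv : v ∈ subdiff h u) :
    fenchel h v = (⟪v, u⟫ : EReal) - h u := by
  refine le_antisymm (iSup_le fun l => ?_) (le_iSup (fun l => (⟪v, l⟫ : EReal) - h l) u)
  have hl := hv l
  rw [inner_sub_right] at hl
  generalize h u = q at hl ⊢
  generalize h l = r at hl ⊢
  induction q with
  | bot => simp
  | top =>
    rw [EReal.top_add_coe, top_le_iff] at hl
    simp [hl]
  | coe q =>
    induction r with
    | bot => exact absurd (le_bot_iff.1 hl) (EReal.coe_ne_bot _)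
    | top => simp
    | coe r =>
      norm_cast at hl ⊢
      linarith

theorem fenchel_le_add_inner_of_mem_subdiff (hv : v ∈ subdiff h u) (w : Y) :
    fenchel h v ≤ fenchel h w + (⟪v - w, u⟫ : EReal) := by
  calc fenchel h v = ((⟪w, u⟫ : EReal) - h u) + (⟪v - w, u⟫ : EReal) := by
        rw [fenchel_eq_of_mem_subdiff hv, inner_sub_left, sub_eq_add_neg, sub_eq_add_neg,
          add_right_comm, ← EReal.coe_add, add_sub_cancel]
    _ ≤ fenchel h w + (⟪v - w, u⟫ : EReal) := by
        gcongr
        exact le_iSup (fun l => (⟪w, l⟫ : EReal) - h l) u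

theorem fenchel_ne_top_of_mem_subdiff (hbot : h u ≠ ⊥) (hv : v ∈ subdiff h u) :
    fenchel h v ≠ ⊤ := by
  rw [fenchel_eq_of_mem_subdiff hv]
  induction hu : h u with
  | bot => exact absurd hu hbot
  | top => simp
  | coe r => exact EReal.coe_ne_top _

theorem convex_setOf_fenchel_ne_top (h : Y → EReal) : Convex ℝ {w | fenchel h w ≠ ⊤} := by
  intro w hw w' hw' a b ha hb hab
  set C := (fenchel h w).toReal
  set C' := (fenchel h w').toReal
  have hC := fenchel_le_coe_iff.1 (EReal.le_coe_toReal hw)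
  have hC' := fenchel_le_coe_iff.1 (EReal.le_coe_toReal hw')
  suffices hle : fenchel h (a • w + b • w') ≤ ((a * C + b * C' : ℝ) : EReal) from
    ne_top_of_le_ne_top (EReal.coe_ne_top _) hle
  refine fenchel_le_coe_iff.2 fun l => ?_
  calc ((⟪a • w + b • w', l⟫ - (a * C + b * C') : ℝ) : EReal)
      ≤ ((max (⟪w, l⟫ - C) (⟪w', l⟫ - C') : ℝ) : EReal) := by
        rw [EReal.coe_le_coe_iff, inner_add_left, real_inner_smul_left, real_inner_smul_left]
        have := Convex.combo_le_max (⟪w, l⟫ - C) (⟪w', l⟫ - C') ha hb hab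
        simp only [smul_eq_mul] at this
        linarith
    _ ≤ h l := by
        rw [EReal.coe_strictMono.monotone.map_max]
        exact max_le (hC l) (hC' l)

theorem IsProx.inv_smul_sub_mem_subdiff (hp : IsProx h g x p) (hh : IsProper h)
    (hcvx : IsConvex h) (hg : 0 < g) : g⁻¹ • (x - p) ∈ subdiff h p := by
  intro w
  by_cases hw : h w = ⊤
  · exact hw ▸ le_top
  have hpa := (hh.coe_toReal (hp.ne_top hh.exists_ne_top)).symm
  have hwb := (hh.coe_toReal hw).symm
  set a := (h p).toReal
  set b := (h w).toReal
  rw [hpa, hwb, real_inner_smul_left]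
  norm_cast
  -- Compare `p` with the points `(1 - t) • p + t • w` of the segment to `w` and let `t → 0`.
  suffices key : a + g⁻¹ * ⟪x - p, w - p⟫ - b ≤ 0 by linarith
  refine nonpos_of_forall_le_mul (B := ‖w - p‖ ^ 2 / (2 * g)) fun t ⟨ht, ht1⟩ => ?_
  have hseg := hp.le_coe (hcvx.le_of_le (sub_nonneg.2 ht1) ht.le (by ring) hpa.le hwb.le)
  rw [hpa, EReal.coe_le_coe_iff,
    show x - ((1 - t) • p + t • w) = (x - p) - t • (w - p) by module,
    norm_sub_sq_real, norm_smul, real_inner_smul_right, mul_pow, Real.norm_eq_abs, sq_abs] at hseg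
  field_simp at hseg ⊢
  refine le_of_mul_le_mul_left (a := t) ?_ ht
  linarith

theorem norm_sub_midpoint_sq (x u v : Y) :
    ‖x - midpoint ℝ u v‖ ^ 2 = (‖x - u‖ ^ 2 + ‖x - v‖ ^ 2) / 2 - ‖u - v‖ ^ 2 / 4 := by
  have := EuclideanGeometry.dist_sq_add_dist_sq_eq_two_mul_dist_midpoint_sq_add_half_dist_sq x u v
  simp only [dist_eq_norm] at this
  linarith

theorem exists_isProx [CompleteSpace Y] (htop : ∃ u, h u ≠ ⊤) (hlsc : LowerSemicontinuous h)
    (hcvx : IsConvex h) (hw : fenchel h w ≠ ⊤) (hg : 0 < g) (x : Y) : ∃ p, IsProx h g x p := by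
  have hminorant := fenchel_le_coe_iff.1 (EReal.le_coe_toReal hw)
  set C := (fenchel h w).toReal
  refine exists_forall_le_of_midpoint_add_le (B := ⟪w, x⟫ - C - g * ‖w‖ ^ 2 / 2) (c := 1 / (8 * g))
    ?_ (fun μ => ?_) ?_ (by positivity) fun u v a hu hv => ?_
  · have hquad : Continuous fun μ : Y => ((‖x - μ‖ ^ 2 / (2 * g) : ℝ) : EReal) :=
      continuous_coe_real_ereal.comp (by fun_prop)
    exact hlsc.add' hquad.lowerSemicontinuous fun μ => EReal.continuousAt_add
      (Or.inr (EReal.coe_ne_bot _)) (Or.inr (EReal.coe_ne_top _))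
  · have hsq : 0 ≤ ‖x - μ - g • w‖ ^ 2 / (2 * g) := by positivity
    rw [norm_sub_sq_real, norm_smul, real_inner_smul_right, mul_pow, Real.norm_eq_abs, sq_abs,
      real_inner_comm, inner_sub_right] at hsq
    refine le_trans ?_ (add_le_add_left (hminorant μ) _)
    norm_cast
    field_simp at hsq ⊢
    linarith
  · exact htop.imp fun u hu => EReal.add_ne_top hu (EReal.coe_ne_top _)
  · rw [add_coe_le_coe_iff] at hu hv
    rw [add_assoc, ← EReal.coe_add, add_coe_le_coe_iff, norm_sub_midpoint_sq, midpoint_eq_smul_add,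
      smul_add]
    refine (hcvx.le_of_le (by norm_num) (by norm_num) (by norm_num) hu hv).trans_eq ?_
    congr 1
    norm_num
    field_simp
    ring

/-! ### The closure of the range of the subdifferential -/

theorem exists_mem_subdiff_norm_sub_sq_le [CompleteSpace Y] (hh : IsProper h)
    (hlsc : LowerSemicontinuous h) (hcvx : IsConvex h) {a C : ℝ} (hu : h u ≤ a)
    (hw : fenchel h w ≤ C) (hg : 0 < g) :
    ∃ p, ∃ v ∈ subdiff h p, ‖v - w‖ ^ 2 ≤ 2 * (a + C - ⟪w, u⟫) / g := by
  obtain ⟨p, hp⟩ := exists_isProx hh.exists_ne_top hlsc hcvx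
    (ne_top_of_le_ne_top (EReal.coe_ne_top _) hw) hg (u + g • w)
  refine ⟨p, _, hp.inv_smul_sub_mem_subdiff hh hcvx hg, ?_⟩
  have hle : ⟪w, p⟫ - C ≤ a + ‖u + g • w - u‖ ^ 2 / (2 * g) - ‖u + g • w - p‖ ^ 2 / (2 * g) :=
    EReal.coe_le_coe_iff.1 ((fenchel_le_coe_iff.1 hw p).trans (hp.le_coe hu))
  have hdiff : g⁻¹ • (u + g • w - p) - w = g⁻¹ • (u - p) := by
    rw [add_sub_right_comm, smul_add, inv_smul_smul₀ hg.ne', add_sub_cancel_right]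
  rw [add_sub_cancel_left, add_sub_right_comm u, norm_add_sq_real, real_inner_smul_right,
    real_inner_comm w (u - p), inner_sub_right] at hle
  rw [hdiff, norm_smul, mul_pow, norm_inv, Real.norm_of_nonneg hg.le]
  field_simp at hle ⊢
  linarith

theorem closure_range_subdiff_eq_closure_fenchel_ne_top [CompleteSpace Y] (hh : IsProper h)
    (hlsc : LowerSemicontinuous h) (hcvx : IsConvex h) :
    closure {v | ∃ u, v ∈ subdiff h u} = closure {w | fenchel h w ≠ ⊤} := by
  refine le_antisymm
    (closure_mono fun v ⟨u, hv⟩ => fenchel_ne_top_of_mem_subdiff (hh.ne_bot u) hv)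
    (closure_minimal (fun w hw => ?_) isClosed_closure)
  obtain ⟨u, hu⟩ := hh.exists_ne_top
  set K := 2 * ((h u).toReal + (fenchel h w).toReal - ⟪w, u⟫)
  refine Metric.mem_closure_iff.2 fun e he => ?_
  have hg : 0 < |K| / e ^ 2 + 1 := by positivity
  obtain ⟨p, v, hv, hvw⟩ := exists_mem_subdiff_norm_sub_sq_le hh hlsc hcvx
    (EReal.le_coe_toReal hu) (EReal.le_coe_toReal hw) hg
  refine ⟨v, ⟨p, hv⟩, ?_⟩
  rw [dist_comm, dist_eq_norm]
  refine lt_of_pow_lt_pow_left₀ 2 he.le (hvw.trans_lt ?_)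
  rw [div_lt_iff₀ hg, mul_add, mul_div_cancel₀ _ (by positivity)]
  linarith [le_abs_self K, pow_pos he 2]

theorem inner_sub_nonneg_of_norm_min [CompleteSpace Y] (hh : IsProper h)
    (hlsc : LowerSemicontinuous h) (hcvx : IsConvex h)
    (hmem : sbar ∈ closure {v | ∃ u, v ∈ subdiff h u})
    (hmin : ∀ v ∈ closure {v | ∃ u, v ∈ subdiff h u}, ‖sbar‖ ≤ ‖v‖) (hv : v ∈ subdiff h u) :
    0 ≤ ⟪v - sbar, sbar⟫ := by
  set K := closure {v | ∃ u, v ∈ subdiff h u} with hK_def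
  have hK : Convex ℝ K := by
    rw [hK_def, closure_range_subdiff_eq_closure_fenchel_ne_top hh hlsc hcvx]
    exact (convex_setOf_fenchel_ne_top h).closure
  have : Nonempty K := ⟨⟨sbar, hmem⟩⟩
  have hproj : ‖0 - sbar‖ = ⨅ z : K, ‖0 - (z : Y)‖ := by
    simp only [zero_sub, norm_neg]
    exact le_antisymm (le_ciInf fun z => hmin z z.2)
      (ciInf_le ⟨0, Set.forall_mem_range.2 fun _ => norm_nonneg _⟩ (⟨sbar, hmem⟩ : K))
  have hle := (norm_eq_iInf_iff_real_inner_le_zero hK hmem).1 hproj v (subset_closure ⟨u, hv⟩)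
  rw [zero_sub, inner_neg_left, real_inner_comm] at hle
  linarith

end ConvexAnalysis

/-! ### Inexact proximal point sequences -/

/-- Sequences produced by the inexact proximal point algorithm on `h`, described through
subgradients: `lamstar (k + 1)` is an exact resolvent of `lam k` with step `γ k`, `sstar (k + 1)` is
the associated subgradient, and `lam (k + 1)` approximates `lamstar (k + 1)` up to `ε (k + 1)`. The
values of `lamstar`, `sstar` and `ε` at `0` are irrelevant. -/
structure IsInexactProxSeq {Y : Type*} [NormedAddCommGroup Y] [InnerProductSpace ℝ Y]
    (h : Y → EReal) (γ ε : ℕ → ℝ) (lam lamstar sstar : ℕ → Y) : Prop where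
  step_pos : ∀ k, 0 < γ k
  mem_subdiff : ∀ k, sstar (k + 1) ∈ subdiff h (lamstar (k + 1))
  eq_add : ∀ k, lam k = lamstar (k + 1) + γ k • sstar (k + 1)
  error_le : ∀ k, ‖lam (k + 1) - lamstar (k + 1)‖ ≤ ε (k + 1)

/-- The total length `∑ i < n, γ i` of the first `n` steps. -/
abbrev totalStep (γ : ℕ → ℝ) (n : ℕ) : ℝ := ∑ i ∈ Finset.range n, γ i

theorem totalStep_succ (γ : ℕ → ℝ) (n : ℕ) : totalStep γ (n + 1) = totalStep γ n + γ n :=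
  Finset.sum_range_succ γ n

theorem totalStep_nonneg {γ : ℕ → ℝ} (hγ : ∀ k, 0 < γ k) (n : ℕ) : 0 ≤ totalStep γ n :=
  Finset.sum_nonneg fun i _ => (hγ i).le

theorem le_totalStep_succ {γ : ℕ → ℝ} (hγ : ∀ k, 0 < γ k) (n : ℕ) : γ 0 ≤ totalStep γ (n + 1) :=
  Finset.single_le_sum (fun i _ => (hγ i).le) (Finset.mem_range.2 n.succ_pos)

/-- The Lyapunov function of the rate proof: `totalStep γ n` times the excess of `‖sstar n‖ ^ 2`
over `‖sbar‖ ^ 2`, plus twice the tilt of `h` by `sbar` at `lamstar n`. -/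
def proxEnergy {Y : Type*} [NormedAddCommGroup Y] [InnerProductSpace ℝ Y]
    (h : Y → EReal) (γ : ℕ → ℝ) (lamstar sstar : ℕ → Y) (sbar : Y) (n : ℕ) : ℝ :=
  totalStep γ n * (‖sstar n‖ ^ 2 - ‖sbar‖ ^ 2) + 2 * tilt h sbar (lamstar n)

namespace IsInexactProxSeq

variable {Y : Type*} [NormedAddCommGroup Y] [InnerProductSpace ℝ Y] {h : Y → EReal}
  {γ ε : ℕ → ℝ} {lam lamstar sstar : ℕ → Y} {sbar lb : Y}

theorem of_isProx (hh : IsProper h) (hcvx : IsConvex h) (hγ : ∀ k, 0 < γ k)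
    (hprox : ∀ k, IsProx h (γ k) (lam k) (lamstar (k + 1)))
    (hsstar : ∀ k, sstar (k + 1) = (γ k)⁻¹ • (lam k - lamstar (k + 1)))
    (herr : ∀ k, ‖lam (k + 1) - lamstar (k + 1)‖ ≤ ε (k + 1)) :
    IsInexactProxSeq h γ ε lam lamstar sstar where
  step_pos := hγ
  mem_subdiff k := hsstar k ▸ (hprox k).inv_smul_sub_mem_subdiff hh hcvx (hγ k)
  eq_add k := by rw [hsstar, smul_inv_smul₀ (hγ k).ne', add_sub_cancel]
  error_le := herr

variable (hseq : IsInexactProxSeq h γ ε lam lamstar sstar)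

include hseq

theorem error_nonneg (k : ℕ) : 0 ≤ ε (k + 1) :=
  (norm_nonneg _).trans (hseq.error_le k)

theorem lamstar_sub_lamstar_succ (k : ℕ) :
    lamstar (k + 1) - lamstar (k + 2)
      = γ (k + 1) • sstar (k + 2) - (lam (k + 1) - lamstar (k + 1)) := by
  rw [hseq.eq_add (k + 1)]
  abel

theorem inner_error_le (v : Y) (k : ℕ) :
    ⟪v, lam (k + 1) - lamstar (k + 1)⟫ ≤ ‖v‖ * ε (k + 1) :=
  (real_inner_le_norm _ _).trans (mul_le_mul_of_nonneg_left (hseq.error_le k) (norm_nonneg v))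

section Fejer

variable (hh : IsProper h) (hlb : sbar ∈ subdiff h lb)
  (hvar : ∀ u, ∀ v ∈ subdiff h u, 0 ≤ ⟪v - sbar, sbar⟫)

include hh hlb hvar

theorem norm_drift_sq_add_sq_le (k : ℕ) :
    ‖lamstar (k + 1) + totalStep γ (k + 1) • sbar - lb‖ ^ 2 + (γ k * ‖sstar (k + 1) - sbar‖) ^ 2
      ≤ ‖lam k + totalStep γ k • sbar - lb‖ ^ 2 := by
  set z := lamstar (k + 1) + totalStep γ (k + 1) • sbar - lb with hz
  have hsplit : lam k + totalStep γ k • sbar - lb = z + γ k • (sstar (k + 1) - sbar) := by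
    rw [hz, hseq.eq_add k, totalStep_succ]
    module
  have hinner : 0 ≤ ⟪z, sstar (k + 1) - sbar⟫ := by
    rw [hz, add_sub_right_comm, real_inner_comm, inner_add_right, real_inner_smul_right]
    exact add_nonneg (inner_sub_sub_nonneg_of_mem_subdiff hh (hseq.mem_subdiff k) hlb)
      (mul_nonneg (totalStep_nonneg hseq.step_pos _) (hvar _ _ (hseq.mem_subdiff k)))
  rw [hsplit, norm_add_sq_real, real_inner_smul_right, norm_smul,
    Real.norm_of_nonneg (hseq.step_pos k).le]
  linarith [mul_nonneg (hseq.step_pos k).le hinner]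

theorem norm_drift_lamstar_le (k : ℕ) :
    ‖lamstar (k + 1) + totalStep γ (k + 1) • sbar - lb‖ ≤ ‖lam k + totalStep γ k • sbar - lb‖ :=
  le_of_sq_le_sq ((le_add_of_nonneg_right (sq_nonneg _)).trans
    (hseq.norm_drift_sq_add_sq_le hh hlb hvar k)) (norm_nonneg _)

theorem step_mul_norm_sstar_sub_le (k : ℕ) :
    γ k * ‖sstar (k + 1) - sbar‖ ≤ ‖lam k + totalStep γ k • sbar - lb‖ :=
  le_of_sq_le_sq ((le_add_of_nonneg_left (sq_nonneg _)).trans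
    (hseq.norm_drift_sq_add_sq_le hh hlb hvar k)) (norm_nonneg _)

theorem exists_norm_drift_le (hε : Summable ε) :
    ∃ R, ∀ k, ‖lam k + totalStep γ k • sbar - lb‖ ≤ R := by
  have hbdd : BddAbove (Set.range fun k => ‖lam k + totalStep γ k • sbar - lb‖) := by
    refine bddAbove_range_of_le_add_summable ((summable_nat_add_iff 1).2 hε) fun k => ?_
    calc ‖lam (k + 1) + totalStep γ (k + 1) • sbar - lb‖
        = ‖(lamstar (k + 1) + totalStep γ (k + 1) • sbar - lb)
            + (lam (k + 1) - lamstar (k + 1))‖ := by congr 1; abel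
      _ ≤ _ := norm_add_le_of_le (hseq.norm_drift_lamstar_le hh hlb hvar k) (hseq.error_le k)
  exact hbdd.imp fun R hR k => hR ⟨k, rfl⟩

end Fejer

section Energy

variable (hh : IsProper h)

include hh

theorem norm_sstar_succ_sq_le (k : ℕ) :
    ‖sstar (k + 2)‖ ^ 2 ≤ ‖sstar (k + 1)‖ ^ 2 + (ε (k + 1) / γ (k + 1)) ^ 2 := by
  set d := sstar (k + 1) - sstar (k + 2) with hd
  have hmono := inner_sub_sub_nonneg_of_mem_subdiff hh
    (hseq.mem_subdiff k) (hseq.mem_subdiff (k + 1))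
  rw [hseq.lamstar_sub_lamstar_succ, inner_sub_right, real_inner_smul_right] at hmono
  have herr := hseq.inner_error_le (-d) k
  rw [inner_neg_left, norm_neg] at herr
  have hinner : -(‖d‖ * (ε (k + 1) / γ (k + 1))) ≤ ⟪sstar (k + 2), d⟫ := by
    rw [← mul_div_assoc, ← neg_div, div_le_iff₀ (hseq.step_pos _), real_inner_comm]
    linarith
  have hexpand : ‖sstar (k + 1)‖ ^ 2
      = ‖sstar (k + 2)‖ ^ 2 + 2 * ⟪sstar (k + 2), d⟫ + ‖d‖ ^ 2 := by
    rw [← norm_add_sq_real, hd, add_sub_cancel]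
  linarith [sq_nonneg (‖d‖ - ε (k + 1) / γ (k + 1))]

theorem step_mul_norm_sq_sub_le (sbar : Y) (k : ℕ) :
    γ (k + 1) * (‖sstar (k + 2)‖ ^ 2 - ‖sbar‖ ^ 2)
      ≤ 2 * (tilt h sbar (lamstar (k + 1)) - tilt h sbar (lamstar (k + 2)))
        + 2 * (‖sstar (k + 2) - sbar‖ * ε (k + 1)) := by
  have hdescent := inner_sub_le_tilt_sub_tilt hh (hseq.mem_subdiff (k + 1))
    (ne_top_of_mem_subdiff hh.exists_ne_top (hseq.mem_subdiff k)) sbar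
  rw [hseq.lamstar_sub_lamstar_succ, inner_sub_right, real_inner_smul_right] at hdescent
  have hpolar : ‖sstar (k + 2)‖ ^ 2 - ‖sbar‖ ^ 2
      ≤ 2 * ⟪sstar (k + 2) - sbar, sstar (k + 2)⟫ := by
    rw [inner_sub_left, real_inner_self_eq_norm_sq, real_inner_comm]
    linarith [sq_nonneg ‖sstar (k + 2) - sbar‖, norm_sub_sq_real (sstar (k + 2)) sbar]
  linarith [mul_le_mul_of_nonneg_left hpolar (hseq.step_pos (k + 1)).le,
    hseq.inner_error_le (sstar (k + 2) - sbar) k]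

theorem proxEnergy_succ_le (sbar : Y) (k : ℕ) :
    proxEnergy h γ lamstar sstar sbar (k + 2) ≤ proxEnergy h γ lamstar sstar sbar (k + 1)
      + (2 * (‖sstar (k + 2) - sbar‖ * ε (k + 1))
        + (ε (k + 1) / γ (k + 1)) ^ 2 * totalStep γ (k + 1)) := by
  have hnorm := mul_le_mul_of_nonneg_left (hseq.norm_sstar_succ_sq_le hh k)
    (totalStep_nonneg hseq.step_pos (k + 1))
  rw [proxEnergy, proxEnergy, totalStep_succ γ (k + 1)]
  linarith [hseq.step_mul_norm_sq_sub_le hh sbar k]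

variable (hlb : sbar ∈ subdiff h lb) (hvar : ∀ u, ∀ v ∈ subdiff h u, 0 ≤ ⟪v - sbar, sbar⟫)
  (hε : Summable ε) (hεγ : Summable fun k => ε (k + 1) / γ (k + 1) * totalStep γ (k + 1))

include hlb hvar hε hεγ

theorem bddAbove_range_proxEnergy :
    BddAbove (Set.range fun k => proxEnergy h γ lamstar sstar sbar (k + 1)) := by
  obtain ⟨R, hR⟩ := hseq.exists_norm_drift_le hh hlb hvar hε
  have hγ0 := hseq.step_pos 0
  have hσ := le_totalStep_succ hseq.step_pos
  refine bddAbove_range_of_le_add_summable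
    (((summable_of_summable_mul hγ0 hσ hεγ).mul_left (2 * R)).add
      (summable_sq_mul_of_summable_mul hγ0 hσ hεγ)) fun k => ?_
  have hnorm : ‖sstar (k + 2) - sbar‖ ≤ R / γ (k + 1) := by
    rw [le_div_iff₀' (hseq.step_pos _)]
    exact (hseq.step_mul_norm_sstar_sub_le hh hlb hvar (k + 1)).trans (hR _)
  have herr : ‖sstar (k + 2) - sbar‖ * ε (k + 1) ≤ R * (ε (k + 1) / γ (k + 1)) :=
    (mul_le_mul_of_nonneg_right hnorm (hseq.error_nonneg k)).trans_eq (by ring)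
  linarith [hseq.proxEnergy_succ_le hh sbar k]

theorem exists_totalStep_mul_norm_sub_sq_le :
    ∃ C, ∀ k, totalStep γ (k + 1) * ‖sstar (k + 1) - sbar‖ ^ 2 ≤ C := by
  obtain ⟨D, hD⟩ := hseq.bddAbove_range_proxEnergy hh hlb hvar hε hεγ
  refine ⟨D - 2 * tilt h sbar lb, fun k => ?_⟩
  have henergy : proxEnergy h γ lamstar sstar sbar (k + 1) ≤ D := hD ⟨k, rfl⟩
  have htilt : tilt h sbar lb ≤ tilt h sbar (lamstar (k + 1)) := tilt_le_tilt_of_mem_subdiff hh hlb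
    (ne_top_of_mem_subdiff hh.exists_ne_top (hseq.mem_subdiff k))
  have hnorm : ‖sstar (k + 1) - sbar‖ ^ 2 ≤ ‖sstar (k + 1)‖ ^ 2 - ‖sbar‖ ^ 2 := by
    have hinner := hvar _ _ (hseq.mem_subdiff k)
    rw [inner_sub_left, real_inner_self_eq_norm_sq] at hinner
    linarith [norm_sub_sq_real (sstar (k + 1)) sbar]
  rw [proxEnergy] at henergy
  linarith [mul_le_mul_of_nonneg_left hnorm (totalStep_nonneg hseq.step_pos (k + 1))]

theorem exists_norm_sstar_sub_le :
    ∃ C, 0 ≤ C ∧ ∀ k, ‖sstar (k + 1) - sbar‖ ≤ C / √(totalStep γ (k + 1)) := by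
  obtain ⟨C, hC⟩ := hseq.exists_totalStep_mul_norm_sub_sq_le hh hlb hvar hε hεγ
  refine ⟨√C, Real.sqrt_nonneg C, fun k => ?_⟩
  have hσ : 0 < totalStep γ (k + 1) :=
    (hseq.step_pos 0).trans_le (le_totalStep_succ hseq.step_pos k)
  rw [le_div_iff₀' (Real.sqrt_pos.2 hσ), ← Real.sqrt_sq (norm_nonneg _), ← Real.sqrt_mul hσ.le]
  exact Real.sqrt_le_sqrt (hC k)

theorem exists_fenchel_le_add :
    ∃ M : ℝ, ∀ k,
      fenchel h (sstar (k + 1)) ≤ fenchel h sbar + ((M / √(totalStep γ (k + 1)) : ℝ) : EReal) ∧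
      fenchel h sbar ≤ fenchel h (sstar (k + 1)) + ((M / √(totalStep γ (k + 1)) : ℝ) : EReal) := by
  obtain ⟨C, hC, hrate⟩ := hseq.exists_norm_sstar_sub_le hh hlb hvar hε hεγ
  obtain ⟨R, hR⟩ := hseq.exists_norm_drift_le hh hlb hvar hε
  have hinner {k : ℕ} {v z : Y} (hv : ‖v‖ ≤ C / √(totalStep γ (k + 1))) (hz : ‖z‖ ≤ R + ‖lb‖) :
      ⟪v, z⟫ ≤ C * (R + ‖lb‖) / √(totalStep γ (k + 1)) :=
    ((real_inner_le_norm v z).trans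
      (mul_le_mul hv hz (norm_nonneg z) (by positivity))).trans_eq (by ring)
  refine ⟨C * (R + ‖lb‖), fun k => ⟨?_, ?_⟩⟩
  · refine (fenchel_le_add_inner_of_mem_subdiff (hseq.mem_subdiff k) sbar).trans
      (add_le_add_right (EReal.coe_le_coe_iff.2 ?_) _)
    have hdrift : ‖lamstar (k + 1) + totalStep γ (k + 1) • sbar‖ ≤ R + ‖lb‖ :=
      norm_le_norm_sub_add _ lb |>.trans
        (add_le_add_left ((hseq.norm_drift_lamstar_le hh hlb hvar k).trans (hR k)) _)
    calc ⟪sstar (k + 1) - sbar, lamstar (k + 1)⟫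
        ≤ ⟪sstar (k + 1) - sbar, lamstar (k + 1) + totalStep γ (k + 1) • sbar⟫ := by
          rw [inner_add_right, real_inner_smul_right]
          exact le_add_of_nonneg_right (mul_nonneg (totalStep_nonneg hseq.step_pos _)
            (hvar _ _ (hseq.mem_subdiff k)))
      _ ≤ C * (R + ‖lb‖) / √(totalStep γ (k + 1)) := hinner (hrate k) hdrift
  · refine (fenchel_le_add_inner_of_mem_subdiff hlb (sstar (k + 1))).trans
      (add_le_add_right (EReal.coe_le_coe_iff.2 (hinner ?_ ?_)) _)
    · exact norm_sub_rev sbar _ ▸ hrate k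
    · exact le_add_of_nonneg_left ((norm_nonneg _).trans (hR 0))

end Energy

end IsInexactProxSeq

theorem statement10_general
    {Y : Type*} [NormedAddCommGroup Y] [InnerProductSpace ℝ Y] [CompleteSpace Y]
    {h : Y → EReal} (hh : IsProper h) (hlsc : LowerSemicontinuous h) (hcvx : IsConvex h)
    {γ ε : ℕ → ℝ} (hγ : ∀ k, 0 < γ k) {lam lamstar sstar : ℕ → Y}
    (hprox : ∀ k, IsProx h (γ k) (lam k) (lamstar (k + 1)))
    (hsstar : ∀ k, sstar (k + 1) = (γ k)⁻¹ • (lam k - lamstar (k + 1)))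
    (herr : ∀ k, ‖lam (k + 1) - lamstar (k + 1)‖ ≤ ε (k + 1))
    (hε : Summable ε)
    (hεγ : Summable fun k => ε (k + 1) / γ (k + 1) * ∑ i ∈ Finset.range (k + 1), γ i)
    {sbar lb : Y} (hmin : ∀ v ∈ closure {v | ∃ u, v ∈ subdiff h u}, ‖sbar‖ ≤ ‖v‖)
    (hlb : sbar ∈ subdiff h lb) :
    ∃ M : ℝ, ∀ k,
      fenchel h (sstar (k + 1)) ≤ fenchel h sbar
          + ((M / √(∑ i ∈ Finset.range (k + 1), γ i) : ℝ) : EReal) ∧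
      fenchel h sbar ≤ fenchel h (sstar (k + 1))
          + ((M / √(∑ i ∈ Finset.range (k + 1), γ i) : ℝ) : EReal) :=
  (IsInexactProxSeq.of_isProx hh hcvx hγ hprox hsstar herr).exists_fenchel_le_add hh hlb
    (fun _ _ => inner_sub_nonneg_of_norm_min hh hlsc hcvx (subset_closure ⟨lb, hlb⟩) hmin) hε hεγ

theorem statement10
    {Y : Type*}
    [NormedAddCommGroup Y] [InnerProductSpace ℝ Y] [CompleteSpace Y]
    (h : Y → EReal)
    (hh_bot : ∀ u : Y, h u ≠ ⊥) (hh_top : ∃ u : Y, h u ≠ ⊤)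
    (hh_lsc : LowerSemicontinuous h)
    (hh_cvx : ∀ u v : Y, ∀ a b : ℝ, 0 ≤ a → 0 ≤ b → a + b = 1 →
      h (a • u + b • v) ≤ (a : EReal) * h u + (b : EReal) * h v)
    (γ : ℕ → ℝ) (hγ : ∀ k : ℕ, 0 < γ k) (ε : ℕ → ℝ) (hε : ∀ k : ℕ, 0 ≤ ε k)
    (lam lamstar sstar ss : ℕ → Y)
    (hmin : ∀ (k : ℕ) (μ : Y),
      h (lamstar (k+1)) + ((‖lam k - lamstar (k+1)‖ ^ 2 / (2 * γ k) : ℝ) : EReal)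
        ≤ h μ + ((‖lam k - μ‖ ^ 2 / (2 * γ k) : ℝ) : EReal))
    (hsstar : ∀ k : ℕ, sstar (k+1) = (γ k)⁻¹ • (lam k - lamstar (k+1)))
    (herr : ∀ k : ℕ, ‖lam (k+1) - lamstar (k+1)‖ ≤ ε (k+1))
    (hss : ∀ k : ℕ, ss (k+1) = (γ k)⁻¹ • (lam k - lam (k+1)))
    (A1 : Summable ε)
    (A2 : (fun k : ℕ => ε (k+1) / γ k * ∑ i ∈ Finset.range (k+1), γ i)
        =O[atTop] fun k : ℕ => 1 / Real.sqrt (∑ i ∈ Finset.range (k+1), γ i))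
    (A3 : Summable fun k : ℕ => (ε (k+1) / γ (k+1)) ^ 2 * ∑ i ∈ Finset.range (k+1), γ i)
    (A4 : Summable fun k : ℕ => ε (k+1) / γ (k+1) * ∑ i ∈ Finset.range (k+1), γ i)
    (A5 : Tendsto (fun n : ℕ => ∑ i ∈ Finset.range n, γ i) atTop atTop)
    (sbar : Y)
    (hsbar_mem : sbar ∈ closure {v : Y | ∃ u : Y, v ∈ subdiff h u})
    (hsbar_min : ∀ v ∈ closure {v : Y | ∃ u : Y, v ∈ subdiff h u}, ‖sbar‖ ≤ ‖v‖)
    (hsub : ∃ lb : Y, sbar ∈ subdiff h lb) :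
    ∃ M : ℝ, ∀ᶠ k in atTop,
      fenchel h (sstar k) ≤ fenchel h sbar
          + ((M / Real.sqrt (∑ i ∈ Finset.range k, γ i) : ℝ) : EReal) ∧
      fenchel h sbar ≤ fenchel h (sstar k)
          + ((M / Real.sqrt (∑ i ∈ Finset.range k, γ i) : ℝ) : EReal) := by
  obtain ⟨M, hM⟩ := statement10_general ⟨hh_bot, hh_top⟩ hh_lsc hh_cvx hγ hmin hsstar herr A1 A4
    hsbar_min hsub.choose_spec
  exact ⟨M, eventually_atTop.2 ⟨1, fun k hk => Nat.sub_add_cancel hk ▸ hM (k - 1)⟩⟩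
end
end

section
/- For an IALM sequence with errors and penalty parameters satisfying (A1)–(A5): the algorithm simply converges to the closest feasible problem (i.e. f(x^k) → ν(s̄), C(x^k) − y^k → s̄, and ‖y^k − Proj_K(C(x^k))‖ → 0) if and only if the value function ν is lower semicontinuous at s̄ and ν(s̄) is finite. If moreover ν(s̄) < ∞, then the algorithm semi-quantitatively converges: in addition, ‖C(x^k) − y^k − s̄‖ = O(1/√(∑_{i=0}^{k−1} γ_i)) and ‖y^k − Proj_K(C(x^k))‖ = O(1/√(∑_{i=0}^{k−1} γ_i)). -/
open scoped RealInnerProductSpace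
open Filter Asymptotics

noncomputable section

/-- The negative dual function `h(l) = sup_{(x,s) ∈ 𝒞} (⟪l, s⟫ − f x)`. -/
def negDual {E Y : Type*} [NormedAddCommGroup Y] [InnerProductSpace ℝ Y]
    (f : E → EReal) (CC : Set (E × Y)) (l : Y) : EReal :=
  ⨆ (p : E × Y) (_ : p ∈ CC), ((⟪l, p.2⟫ : ℝ) : EReal) - f p.1

/-- The value function of the shifted problem: `ν(s̃) = inf { f x | (x, s̃) ∈ 𝒞 }`. -/
def valueFn {E Y : Type*} (f : E → EReal) (CC : Set (E × Y)) (st : Y) : EReal :=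
  ⨅ (x : E) (_ : (x, st) ∈ CC), f x

/-!
The augmented Lagrangian depends on `(x, s)` only through `(s, f x)`, so the method runs on the
epigraph of the value function, a convex subset of `Y × ℝ`, and near-optimality persists on its
closure, where strong convexity in `s` provides exact minimizers. These shadow the inexact
iterates and solve ordinary Lagrangian problems at the multipliers they produce.

Let `Γ` denote the partial sums of the penalties. For a point `(s̄, t)` of the closure, the dual gap
is a Lyapunov function, which makes `γ (‖s‖ ^ 2 - ‖s̄‖ ^ 2)` summable along the exact steps. As
`‖s‖ ^ 2` decreases up to a small error, it follows that `‖s‖ ^ 2 - ‖s̄‖ ^ 2 = O(1 / Γ)`. This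
excess bounds both squared distances, because `s̄` is the projection of `0` and `Proj_K (C x)` is
the projection of `C x`.

Summability and the Cauchy–Schwarz inequality also give `λ + Γ s̄ = o(√Γ)`. Tested against
`(s̄, t)`, near-optimality then yields `limsup f ≤ t`. Taking `t` down to `ν(s̄)` leaves the bound
from below, which is lower semicontinuity. Conversely, `(s̄, t)` ranges over the closure of the
epigraph, so `f → ν(s̄)` forces `ν(s̄) ≤ t` there, which again is lower semicontinuity.
-/

section HilbertGeometry

variable {Y : Type*} [NormedAddCommGroup Y] [InnerProductSpace ℝ Y]

theorem norm_sub_sq_le_of_inner_sub_nonneg {a b : Y} (h : 0 ≤ ⟪a, b - a⟫) :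
    ‖b - a‖ ^ 2 ≤ ‖b‖ ^ 2 - ‖a‖ ^ 2 := by
  have hexpand := norm_add_sq_real a (b - a)
  rw [add_sub_cancel] at hexpand
  linarith

theorem inner_sub_sub_nonpos_of_forall_norm_sub_le {S : Set Y} (hS : Convex ℝ S) {u a w : Y}
    (ha : a ∈ S) (hmin : ∀ b ∈ S, ‖u - a‖ ≤ ‖u - b‖) (hw : w ∈ S) : ⟪u - a, w - a⟫ ≤ 0 := by
  refine (norm_eq_iInf_iff_real_inner_le_zero hS ha).1 (le_antisymm ?_ ?_) w hw
  · have : Nonempty S := ⟨⟨a, ha⟩⟩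
    exact le_ciInf fun b => hmin b b.2
  · exact ciInf_le ⟨0, Set.forall_mem_range.2 fun _ => norm_nonneg _⟩ (⟨a, ha⟩ : S)

theorem inner_sub_nonneg_of_forall_norm_le {S : Set Y} (hS : Convex ℝ S) {a w : Y}
    (ha : a ∈ S) (hmin : ∀ b ∈ S, ‖a‖ ≤ ‖b‖) (hw : w ∈ S) : 0 ≤ ⟪a, w - a⟫ := by
  have hproj := inner_sub_sub_nonpos_of_forall_norm_sub_le hS (u := 0) ha (by simpa using hmin) hw
  rwa [zero_sub, inner_neg_left, neg_nonpos] at hproj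

theorem norm_sub_sq_le_of_forall_norm_sub_le {S : Set Y} (hS : Convex ℝ S) {u a w : Y}
    (ha : a ∈ S) (hmin : ∀ b ∈ S, ‖u - a‖ ≤ ‖u - b‖) (hw : w ∈ S) :
    ‖w - a‖ ^ 2 ≤ ‖u - w‖ ^ 2 - ‖u - a‖ ^ 2 := by
  have hproj := inner_sub_sub_nonpos_of_forall_norm_sub_le hS ha hmin hw
  have h := norm_sub_sq_le_of_inner_sub_nonneg (a := u - a) (b := u - w)
    (by rwa [sub_sub_sub_cancel_left, ← neg_sub w a, inner_neg_right, neg_nonneg])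
  rwa [sub_sub_sub_cancel_left, norm_sub_rev] at h

end HilbertGeometry

section RealSequences

open Finset (range sum_nonneg sum_range_add sum_range_succ sum_sq_le_sum_mul_sum_of_sq_le_mul)

theorem bddAbove_range_of_succ_le_add {a b : ℕ → ℝ} (hb : ∀ n, 0 ≤ b n) (hsum : Summable b)
    (hstep : ∀ n, a (n + 1) ≤ a n + b n) : BddAbove (Set.range a) := by
  have hpartial : ∀ n, a n ≤ a 0 + ∑ i ∈ range n, b i := by
    intro n
    induction n with
    | zero => simp
    | succ n ih => rw [sum_range_succ]; linarith [hstep n]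
  refine ⟨a 0 + ∑' i, b i, Set.forall_mem_range.2 fun n => (hpartial n).trans ?_⟩
  gcongr
  exact hsum.sum_le_tsum _ fun i _ => hb i

theorem summable_of_succ_add_le_add {a b c : ℕ → ℝ} (ha : ∀ n, 0 ≤ a n) (hb : ∀ n, 0 ≤ b n)
    (hc : ∀ n, 0 ≤ c n) (hsum : Summable b) (hstep : ∀ n, a (n + 1) + c n ≤ a n + b n) :
    Summable c := by
  obtain ⟨B, hB⟩ := bddAbove_range_of_succ_le_add (a := fun n => a n + ∑ i ∈ range n, c i) hb hsum
    fun n => by rw [sum_range_succ]; linarith [hstep n]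
  exact summable_of_sum_range_le (c := B) hc fun n =>
    (le_add_of_nonneg_left (ha n)).trans (hB ⟨n, rfl⟩)

theorem norm_sum_smul_sq_le {ι F : Type*} [SeminormedAddCommGroup F] [NormedSpace ℝ F]
    (s : Finset ι) {w : ι → ℝ} (hw : ∀ i ∈ s, 0 ≤ w i) (b : ι → F) :
    ‖∑ i ∈ s, w i • b i‖ ^ 2 ≤ (∑ i ∈ s, w i) * ∑ i ∈ s, w i * ‖b i‖ ^ 2 := by
  calc ‖∑ i ∈ s, w i • b i‖ ^ 2 ≤ (∑ i ∈ s, w i * ‖b i‖) ^ 2 := by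
        gcongr
        refine norm_sum_le_of_le s fun i hi => ?_
        rw [norm_smul, Real.norm_of_nonneg (hw i hi)]
    _ ≤ (∑ i ∈ s, w i) * ∑ i ∈ s, w i * ‖b i‖ ^ 2 :=
        sum_sq_le_sum_mul_sum_of_sq_le_mul s hw
          (fun i hi => mul_nonneg (hw i hi) (sq_nonneg _)) fun i _ => le_of_eq (by ring)

theorem isLittleO_sum_smul_sqrt_sum {F : Type*} [SeminormedAddCommGroup F] [NormedSpace ℝ F]
    {w : ℕ → ℝ} {b : ℕ → F} (hw : ∀ n, 0 ≤ w n) (hsum : Summable fun n => w n * ‖b n‖ ^ 2)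
    (hdiv : Tendsto (fun n => ∑ i ∈ range n, w i) atTop atTop) :
    (fun n => ∑ i ∈ range n, w i • b i) =o[atTop] fun n => √(∑ i ∈ range n, w i) := by
  refine isLittleO_iff.2 fun c hc => ?_
  obtain ⟨N, hN⟩ := ((tendsto_sum_nat_add fun n => w n * ‖b n‖ ^ 2).eventually
    (gt_mem_nhds (by positivity : 0 < (c / 2) ^ 2))).exists
  have htail (m : ℕ) : ‖∑ i ∈ range m, w (i + N) • b (i + N)‖
      ≤ c / 2 * √(∑ i ∈ range (m + N), w i) := by
    have hsq := (summable_nat_add_iff N).2 hsum |>.sum_le_tsum (range m)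
      fun i _ => mul_nonneg (hw (i + N)) (sq_nonneg ‖b (i + N)‖)
    have hle : ∑ i ∈ range m, w (i + N) ≤ ∑ i ∈ range (m + N), w i := by
      simp only [add_comm m N, sum_range_add, add_comm _ N]
      exact le_add_of_nonneg_left (sum_nonneg fun i _ => hw i)
    have hpos : 0 ≤ ∑ i ∈ range (m + N), w i := sum_nonneg fun i _ => hw i
    refine le_of_sq_le_sq ?_ (by positivity)
    calc _ ≤ (∑ i ∈ range m, w (i + N)) * ∑ i ∈ range m, w (i + N) * ‖b (i + N)‖ ^ 2 :=
          norm_sum_smul_sq_le _ (fun i _ => hw _) _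
      _ ≤ (∑ i ∈ range (m + N), w i) * (c / 2) ^ 2 :=
          mul_le_mul hle (hsq.trans hN.le)
            (sum_nonneg fun i _ => mul_nonneg (hw _) (sq_nonneg _)) hpos
      _ = (c / 2 * √(∑ i ∈ range (m + N), w i)) ^ 2 := by rw [mul_pow, Real.sq_sqrt hpos, mul_comm]
  have hhead : ∀ᶠ n in atTop, ‖∑ i ∈ range N, w i • b i‖ ≤ c / 2 * √(∑ i ∈ range n, w i) :=
    ((Real.tendsto_sqrt_atTop.comp hdiv).const_mul_atTop (half_pos hc)).eventually_ge_atTop _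
  filter_upwards [hhead, eventually_ge_atTop N] with n hn hNn
  obtain ⟨m, rfl⟩ := Nat.exists_eq_add_of_le' hNn
  rw [Real.norm_of_nonneg (Real.sqrt_nonneg _)]
  calc ‖∑ i ∈ range (m + N), w i • b i‖
      = ‖∑ i ∈ range N, w i • b i + ∑ i ∈ range m, w (i + N) • b (i + N)‖ := by
        simp only [add_comm m N, sum_range_add, add_comm _ N]
    _ ≤ c / 2 * √(∑ i ∈ range (m + N), w i) + c / 2 * √(∑ i ∈ range (m + N), w i) :=
        norm_add_le_of_le hn (htail m)
    _ = c * √(∑ i ∈ range (m + N), w i) := by ring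

theorem cauchySeq_of_dist_sq_le_add {α : Type*} [PseudoMetricSpace α] {u : ℕ → α} {d : ℕ → ℝ}
    (hd : Tendsto d atTop (nhds 0)) (h : ∀ i j, dist (u i) (u j) ^ 2 ≤ d i + d j) :
    CauchySeq u := by
  rw [cauchySeq_iff_tendsto_dist_atTop_0]
  have hlim : Tendsto (fun n : ℕ × ℕ => √(d n.1 + d n.2)) atTop (nhds 0) := by
    rw [← prod_atTop_atTop_eq]
    simpa using ((hd.comp tendsto_fst).add (hd.comp tendsto_snd)).sqrt
  exact squeeze_zero (fun _ => dist_nonneg) (fun n => Real.le_sqrt_of_sq_le (h n.1 n.2)) hlim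

end RealSequences

section AugmentedLagrangian

variable {Y : Type*} [NormedAddCommGroup Y] [InnerProductSpace ℝ Y]

/-- The ordinary Lagrangian `t - ⟪l, s⟫`, as a function of the perturbation `s` and of an upper
bound `t` for the objective at a point feasible for `s`. -/
def lagrangian (l : Y) (p : Y × ℝ) : ℝ :=
  p.2 - ⟪l, p.1⟫

/-- The augmented Lagrangian in the same coordinates `(s, t)` as `lagrangian`. -/
def augLagrangian (c : ℝ) (l : Y) (p : Y × ℝ) : ℝ :=
  lagrangian l p + c / 2 * ‖p.1‖ ^ 2

@[fun_prop]
theorem continuous_augLagrangian (c : ℝ) (l : Y) : Continuous (augLagrangian c l) := by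
  unfold augLagrangian lagrangian
  fun_prop

theorem lagrangian_add_smul_sub (l : Y) (p q : Y × ℝ) (θ : ℝ) :
    lagrangian l (q + θ • (p - q)) = lagrangian l q + θ * (lagrangian l p - lagrangian l q) := by
  simp only [lagrangian, Prod.fst_add, Prod.snd_add, Prod.smul_fst, Prod.smul_snd, Prod.fst_sub,
    Prod.snd_sub, inner_add_right, inner_smul_right, inner_sub_right, smul_eq_mul]
  ring

/-- The multiplier update `l - c • q.1` appears because it makes the linear part of the expansion
around `q` an ordinary Lagrangian. -/
theorem augLagrangian_sub_augLagrangian (c : ℝ) (l : Y) (p q : Y × ℝ) :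
    augLagrangian c l p - augLagrangian c l q =
      lagrangian (l - c • q.1) p - lagrangian (l - c • q.1) q + c / 2 * ‖p.1 - q.1‖ ^ 2 := by
  simp only [augLagrangian, lagrangian, norm_sub_sq_real, inner_sub_left, real_inner_smul_left,
    real_inner_self_eq_norm_sq, real_inner_comm q.1 p.1]
  ring

theorem augLagrangian_midpoint (c : ℝ) (l : Y) (p q : Y × ℝ) :
    augLagrangian c l (q + (1 / 2 : ℝ) • (p - q)) =
      (augLagrangian c l p + augLagrangian c l q) / 2 - c / 8 * ‖p.1 - q.1‖ ^ 2 := by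
  set m := q + (1 / 2 : ℝ) • (p - q) with hm
  have hp := augLagrangian_sub_augLagrangian c l m q
  have hpq := augLagrangian_sub_augLagrangian c l p q
  have hmq : m.1 - q.1 = (1 / 2 : ℝ) • (p.1 - q.1) := by simp [hm]
  rw [hmq, norm_smul, mul_pow, hm, lagrangian_add_smul_sub] at hp
  norm_num at hp
  linarith

variable {D : Set (Y × ℝ)} {c : ℝ} {l : Y} {q : Y × ℝ}

theorem isMinOn_lagrangian_of_isMinOn_augLagrangian (hD : Convex ℝ D) (hq : q ∈ D)
    (hmin : IsMinOn (augLagrangian c l) D q) : IsMinOn (lagrangian (l - c • q.1)) D q := by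
  intro p hp
  set a := lagrangian (l - c • q.1) p - lagrangian (l - c • q.1) q
  have hsegment : ∀ θ ∈ Set.Ioc (0 : ℝ) 1, 0 ≤ a + θ * (c / 2 * ‖p.1 - q.1‖ ^ 2) := by
    rintro θ ⟨hθ, hθ1⟩
    have hle := sub_nonneg.2 (isMinOn_iff.1 hmin _ (hD.add_smul_sub_mem hq hp ⟨hθ.le, hθ1⟩))
    rw [augLagrangian_sub_augLagrangian, lagrangian_add_smul_sub, Prod.fst_add, Prod.smul_fst,
      add_sub_cancel_left, Prod.fst_sub, add_sub_cancel_left, norm_smul, mul_pow,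
      Real.norm_eq_abs, sq_abs] at hle
    have hmul : 0 ≤ θ * (a + θ * (c / 2 * ‖p.1 - q.1‖ ^ 2)) := by linarith
    exact nonneg_of_mul_nonneg_right hmul hθ
  have hlim : Tendsto (fun θ : ℝ => a + θ * (c / 2 * ‖p.1 - q.1‖ ^ 2)) (nhdsWithin 0 (Set.Ioi 0))
      (nhds a) :=
    (Continuous.tendsto' (by fun_prop) _ _ (by simp)).mono_left nhdsWithin_le_nhds
  exact sub_nonneg.1 (ge_of_tendsto hlim (mem_of_superset (Ioc_mem_nhdsGT one_pos) hsegment))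

theorem exists_isMinOn_augLagrangian [CompleteSpace Y] (hclosed : IsClosed D) (hD : Convex ℝ D)
    (hne : D.Nonempty) (hc : 0 < c) (hbdd : BddBelow (augLagrangian c l '' D)) :
    ∃ q ∈ D, IsMinOn (augLagrangian c l) D q := by
  set m := sInf (augLagrangian c l '' D)
  have hm : ∀ p ∈ D, m ≤ augLagrangian c l p := fun p hp => csInf_le hbdd ⟨p, hp, rfl⟩
  obtain ⟨v, -, hlim, hmem⟩ := exists_seq_tendsto_sInf (hne.image (augLagrangian c l)) hbdd
  choose u hu hval using hmem
  obtain rfl : (fun n => augLagrangian c l (u n)) = v := funext hval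
  have hcauchy : CauchySeq fun n => (u n).1 := by
    refine cauchySeq_of_dist_sq_le_add (d := fun n => 4 / c * (augLagrangian c l (u n) - m))
      (by simpa [m] using (hlim.sub_const m).const_mul (4 / c)) fun i j => ?_
    have hmid := hm _ (hD.add_smul_sub_mem (t := 1 / 2) (hu j) (hu i) (by norm_num))
    rw [augLagrangian_midpoint] at hmid
    rw [dist_eq_norm, ← mul_add, div_mul_eq_mul_div, le_div_iff₀ hc]
    linarith
  obtain ⟨s, hs⟩ := cauchySeq_tendsto_of_complete hcauchy
  have ht : Tendsto (fun n => (u n).2) atTop (nhds (m + ⟪l, s⟫ - c / 2 * ‖s‖ ^ 2)) := by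
    refine ((hlim.add (tendsto_const_nhds.inner hs)).sub ((hs.norm.pow 2).const_mul (c / 2))).congr
      fun n => ?_
    simp only [augLagrangian, lagrangian]
    ring
  refine ⟨_, hclosed.mem_of_tendsto (hs.prodMk_nhds ht) (Eventually.of_forall hu), fun p hp => ?_⟩
  refine le_trans (le_of_eq ?_) (hm p hp)
  simp only [augLagrangian, lagrangian]
  ring

end AugmentedLagrangian

section ExactSteps

variable {Y : Type*} [NormedAddCommGroup Y] [InnerProductSpace ℝ Y]
  {D : Set (Y × ℝ)} {p q z : Y × ℝ} {l l' : Y} {c e : ℝ}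

theorem norm_fst_sq_le_add_sq_div (hc : 0 < c) (hp : p ∈ D) (hq : q ∈ D)
    (hpmin : IsMinOn (lagrangian l) D p) (hqmin : IsMinOn (lagrangian l') D q)
    (hl : ‖l - l' - c • q.1‖ ≤ e) : ‖q.1‖ ^ 2 ≤ ‖p.1‖ ^ 2 + (e / c) ^ 2 := by
  have hmono : ⟪l - l', q.1 - p.1⟫ ≤ 0 := by
    have hpq := isMinOn_iff.1 hpmin q hq
    have hqp := isMinOn_iff.1 hqmin p hp
    simp only [lagrangian] at hpq hqp
    simp only [inner_sub_left, inner_sub_right]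
    linarith
  have herr : -⟪l - l' - c • q.1, q.1 - p.1⟫ ≤ e * ‖q.1 - p.1‖ :=
    (neg_le_abs _).trans ((abs_real_inner_le_norm _ _).trans (by gcongr))
  have hnorm : 2 * ⟪q.1, q.1 - p.1⟫ = ‖q.1‖ ^ 2 - ‖p.1‖ ^ 2 + ‖q.1 - p.1‖ ^ 2 := by
    rw [norm_sub_sq_real, inner_sub_right, real_inner_self_eq_norm_sq]
    ring
  rw [inner_sub_left, real_inner_smul_left] at herr
  have hdiv : ⟪q.1, q.1 - p.1⟫ ≤ e / c * ‖q.1 - p.1‖ := by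
    rw [div_mul_eq_mul_div, le_div_iff₀ hc]
    linarith
  linarith [sq_nonneg (e / c - ‖q.1 - p.1‖), sub_sq (e / c) ‖q.1 - p.1‖]

theorem lagrangian_sub_add_le (hc : 0 ≤ c) (hpq : lagrangian l p ≤ lagrangian l q)
    (hl : ‖l - l' - c • q.1‖ ≤ e) :
    lagrangian l' z - lagrangian l' q + c / 2 * (‖q.1‖ ^ 2 - ‖z.1‖ ^ 2)
      ≤ lagrangian l z - lagrangian l p + e * ‖q.1 - z.1‖ := by
  have herr : -⟪l - l' - c • q.1, q.1 - z.1⟫ ≤ e * ‖q.1 - z.1‖ :=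
    (neg_le_abs _).trans ((abs_real_inner_le_norm _ _).trans (by gcongr))
  have hnorm : c / 2 * (‖q.1‖ ^ 2 - ‖z.1‖ ^ 2) ≤ c * ⟪q.1, q.1 - z.1⟫ := by
    have hpolar : 2 * ⟪q.1, q.1 - z.1⟫ = ‖q.1‖ ^ 2 - ‖z.1‖ ^ 2 + ‖q.1 - z.1‖ ^ 2 := by
      rw [norm_sub_sq_real, inner_sub_right, real_inner_self_eq_norm_sq]
      ring
    nlinarith [sq_nonneg ‖q.1 - z.1‖]
  simp only [lagrangian, inner_sub_left, inner_sub_right, real_inner_smul_left] at *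
  linarith

end ExactSteps

section InexactALM

open Finset (range sum_nonneg sum_range_succ)

variable {Y : Type*} [NormedAddCommGroup Y] [InnerProductSpace ℝ Y]

/-- The inexact augmented Lagrangian method on `D ⊆ Y × ℝ`: the iterate `p n` minimizes the
augmented Lagrangian with penalty `γ n` and multiplier `lam n` over `D` up to
`ε (n + 1) ^ 2 / (2 * γ n)`. Iterates are indexed so that `p n` is the pair `(s, f x)` of
step `n + 1`. -/
structure IsInexactALM (D : Set (Y × ℝ)) (γ ε : ℕ → ℝ) (lam : ℕ → Y) (p : ℕ → Y × ℝ) : Prop where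
  mem (n : ℕ) : p n ∈ D
  augLagrangian_le (n : ℕ) : ∀ q ∈ D, augLagrangian (γ n) (lam n) (p n)
    ≤ augLagrangian (γ n) (lam n) q + ε (n + 1) ^ 2 / (2 * γ n)
  lam_succ (n : ℕ) : lam (n + 1) = lam n - γ n • (p n).1

/-- A sequence `q` of exact minimizers shadowing an inexact run `p` with multipliers `lam`.
Minimality is recorded in its first-order form: `q n` minimizes the ordinary Lagrangian at the
multiplier that the exact step produces. -/
structure IsExactCompanion (D : Set (Y × ℝ)) (γ ε : ℕ → ℝ) (lam : ℕ → Y) (p q : ℕ → Y × ℝ) :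
    Prop where
  mem (n : ℕ) : q n ∈ D
  isMinOn (n : ℕ) : IsMinOn (lagrangian (lam n - γ n • (q n).1)) D (q n)
  mul_norm_sub_le (n : ℕ) : γ n * ‖(p n).1 - (q n).1‖ ≤ ε (n + 1)

variable {D : Set (Y × ℝ)} {γ ε : ℕ → ℝ} {lam : ℕ → Y} {p q : ℕ → Y × ℝ}

theorem IsInexactALM.closure (hp : IsInexactALM D γ ε lam p) :
    IsInexactALM (closure D) γ ε lam p where
  mem n := subset_closure (hp.mem n)
  augLagrangian_le n :=
    have hclosed : IsClosed {q | augLagrangian (γ n) (lam n) (p n)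
        ≤ augLagrangian (γ n) (lam n) q + ε (n + 1) ^ 2 / (2 * γ n)} :=
      isClosed_le (by fun_prop) (by fun_prop)
    closure_minimal (hp.augLagrangian_le n) hclosed
  lam_succ := hp.lam_succ

theorem IsInexactALM.exists_isExactCompanion [CompleteSpace Y] (hclosed : IsClosed D)
    (hD : Convex ℝ D) (hγ : ∀ n, 0 < γ n) (hε : ∀ n, 0 ≤ ε n) (hp : IsInexactALM D γ ε lam p) :
    ∃ q, IsExactCompanion D γ ε lam p q := by
  have hexists (n : ℕ) : ∃ q ∈ D, IsMinOn (augLagrangian (γ n) (lam n)) D q :=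
    exists_isMinOn_augLagrangian hclosed hD ⟨p 0, hp.mem 0⟩ (hγ n)
      ⟨augLagrangian (γ n) (lam n) (p n) - ε (n + 1) ^ 2 / (2 * γ n),
        Set.forall_mem_image.2 fun q hq => sub_le_iff_le_add.2 (hp.augLagrangian_le n q hq)⟩
  choose q hqmem hqmin using hexists
  have hlag (n : ℕ) := isMinOn_lagrangian_of_isMinOn_augLagrangian hD (hqmem n) (hqmin n)
  refine ⟨q, hqmem, hlag, fun n => le_of_sq_le_sq ?_ (hε _)⟩
  have hopt := hp.augLagrangian_le n _ (hqmem n)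
  have hgrowth := augLagrangian_sub_augLagrangian (γ n) (lam n) (p n) (q n)
  have hmin := isMinOn_iff.1 (hlag n) _ (hp.mem n)
  have hle : γ n / 2 * ‖(p n).1 - (q n).1‖ ^ 2 ≤ ε (n + 1) ^ 2 / (2 * γ n) := by linarith
  rw [le_div_iff₀ (mul_pos two_pos (hγ n))] at hle
  linarith

theorem IsExactCompanion.norm_sub_le_div (hγ : ∀ n, 0 < γ n)
    (hq : IsExactCompanion D γ ε lam p q) (n : ℕ) :
    ‖(p n).1 - (q n).1‖ ≤ ε (n + 1) / γ n :=
  (le_div_iff₀' (hγ n)).2 (hq.mul_norm_sub_le n)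

theorem IsExactCompanion.norm_multiplier_sub_le (hγ : ∀ n, 0 < γ n) (hp : IsInexactALM D γ ε lam p)
    (hq : IsExactCompanion D γ ε lam p q) (n : ℕ) :
    ‖(lam n - γ n • (q n).1) - (lam (n + 1) - γ (n + 1) • (q (n + 1)).1)
      - γ (n + 1) • (q (n + 1)).1‖ ≤ ε (n + 1) := by
  have herr : (lam n - γ n • (q n).1) - (lam (n + 1) - γ (n + 1) • (q (n + 1)).1)
      - γ (n + 1) • (q (n + 1)).1 = γ n • ((p n).1 - (q n).1) := by
    rw [hp.lam_succ]
    module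
  rw [herr, norm_smul, Real.norm_of_nonneg (hγ n).le]
  exact hq.mul_norm_sub_le n

theorem IsExactCompanion.norm_sq_succ_le (hγ : ∀ n, 0 < γ n) (hp : IsInexactALM D γ ε lam p)
    (hq : IsExactCompanion D γ ε lam p q) (n : ℕ) :
    ‖(q (n + 1)).1‖ ^ 2 ≤ ‖(q n).1‖ ^ 2 + (ε (n + 1) / γ (n + 1)) ^ 2 :=
  norm_fst_sq_le_add_sq_div (hγ _) (hq.mem _) (hq.mem _) (hq.isMinOn _) (hq.isMinOn _)
    (hq.norm_multiplier_sub_le hγ hp n)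

theorem summable_of_summable_mul_sum {a : ℕ → ℝ} (hγ : ∀ n, 0 < γ n) (ha : ∀ n, 0 ≤ a n)
    (hsum : Summable fun n => a n * ∑ i ∈ range (n + 1), γ i) : Summable a := by
  refine (hsum.mul_right (γ 0)⁻¹).of_nonneg_of_le ha fun n => ?_
  rw [← div_eq_mul_inv, le_div_iff₀ (hγ 0)]
  exact mul_le_mul_of_nonneg_left
    (Finset.single_le_sum (fun i _ => (hγ i).le) (Finset.mem_range.2 n.succ_pos)) (ha n)

theorem IsExactCompanion.bddAbove_norm (hγ : ∀ n, 0 < γ n) (hp : IsInexactALM D γ ε lam p)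
    (hq : IsExactCompanion D γ ε lam p q)
    (hsq : Summable fun n => (ε (n + 1) / γ (n + 1)) ^ 2 * ∑ i ∈ range (n + 1), γ i) :
    BddAbove (Set.range fun n => ‖(q n).1‖) := by
  obtain ⟨B, hB⟩ := bddAbove_range_of_succ_le_add (a := fun n => ‖(q n).1‖ ^ 2)
    (fun _ => sq_nonneg _)
    (summable_of_summable_mul_sum hγ (fun _ => sq_nonneg _) hsq) (hq.norm_sq_succ_le hγ hp)
  exact ⟨√B, Set.forall_mem_range.2 fun n => Real.le_sqrt_of_sq_le (hB ⟨n, rfl⟩)⟩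

variable {z : Y × ℝ}

/-- The Lyapunov function is the dual gap `lagrangian μ z - lagrangian μ (q n)` at the exact
multiplier `μ`: each step lowers it by `γ (‖(q n).1‖ ^ 2 - ‖z.1‖ ^ 2) / 2`, up to a summable
error. -/
theorem IsExactCompanion.summable_mul_norm_sq_sub (hγ : ∀ n, 0 < γ n) (hε : ∀ n, 0 ≤ ε n)
    (hp : IsInexactALM D γ ε lam p) (hq : IsExactCompanion D γ ε lam p q) (hz : z ∈ D)
    (hmin : ∀ w ∈ D, 0 ≤ ⟪z.1, w.1 - z.1⟫) (hεsum : Summable ε)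
    (hsq : Summable fun n => (ε (n + 1) / γ (n + 1)) ^ 2 * ∑ i ∈ range (n + 1), γ i) :
    Summable fun n => γ n * (‖(q n).1‖ ^ 2 - ‖z.1‖ ^ 2) := by
  have hnonneg (n : ℕ) : 0 ≤ γ n * (‖(q n).1‖ ^ 2 - ‖z.1‖ ^ 2) := mul_nonneg (hγ n).le
    ((sq_nonneg _).trans (norm_sub_sq_le_of_inner_sub_nonneg (hmin _ (hq.mem n))))
  obtain ⟨R, hR⟩ := hq.bddAbove_norm hγ hp hsq
  have herr (n : ℕ) : ε (n + 1) * ‖(q (n + 1)).1 - z.1‖ ≤ (R + ‖z.1‖) * ε (n + 1) := by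
    rw [mul_comm]
    gcongr
    · exact hε _
    · exact norm_sub_le_of_le (hR ⟨n + 1, rfl⟩) le_rfl
  have hgap := summable_of_succ_add_le_add
    (a := fun n => lagrangian (lam n - γ n • (q n).1) z - lagrangian (lam n - γ n • (q n).1) (q n))
    (fun n => sub_nonneg.2 (isMinOn_iff.1 (hq.isMinOn n) z hz))
    (fun n => (mul_nonneg (hε (n + 1)) (norm_nonneg _)).trans (herr n))
    (fun n => div_nonneg (hnonneg (n + 1)) two_pos.le)
    (((summable_nat_add_iff 1).2 hεsum).mul_left _) fun n => by
      have := lagrangian_sub_add_le (z := z) (hγ (n + 1)).le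
        (isMinOn_iff.1 (hq.isMinOn n) _ (hq.mem (n + 1))) (hq.norm_multiplier_sub_le hγ hp n)
      linarith [herr n]
  refine (summable_nat_add_iff 1).1 ((hgap.mul_left 2).congr fun n => by ring)

theorem IsExactCompanion.isBigO_norm_sq_sub (hγ : ∀ n, 0 < γ n) (hε : ∀ n, 0 ≤ ε n)
    (hp : IsInexactALM D γ ε lam p) (hq : IsExactCompanion D γ ε lam p q) (hz : z ∈ D)
    (hmin : ∀ w ∈ D, 0 ≤ ⟪z.1, w.1 - z.1⟫) (hεsum : Summable ε)
    (hsq : Summable fun n => (ε (n + 1) / γ (n + 1)) ^ 2 * ∑ i ∈ range (n + 1), γ i) :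
    (fun n => ‖(q n).1‖ ^ 2 - ‖z.1‖ ^ 2)
      =O[atTop] fun n => (∑ i ∈ range (n + 1), γ i)⁻¹ := by
  have hsum := hq.summable_mul_norm_sq_sub hγ hε hp hz hmin hεsum hsq
  have hnonneg (n : ℕ) : 0 ≤ ‖(q n).1‖ ^ 2 - ‖z.1‖ ^ 2 :=
    (sq_nonneg _).trans (norm_sub_sq_le_of_inner_sub_nonneg (hmin _ (hq.mem n)))
  have hpos (n : ℕ) : 0 < ∑ i ∈ range (n + 1), γ i :=
    Finset.sum_pos (fun i _ => hγ i) Finset.nonempty_range_add_one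
  have hstep (n : ℕ) :
      (∑ i ∈ range (n + 2), γ i) * (‖(q (n + 1)).1‖ ^ 2 - ‖z.1‖ ^ 2)
        ≤ (∑ i ∈ range (n + 1), γ i) * (‖(q n).1‖ ^ 2 - ‖z.1‖ ^ 2)
          + ((ε (n + 1) / γ (n + 1)) ^ 2 * (∑ i ∈ range (n + 1), γ i)
            + γ (n + 1) * (‖(q (n + 1)).1‖ ^ 2 - ‖z.1‖ ^ 2)) := by
    have hdecr := mul_le_mul_of_nonneg_left (hq.norm_sq_succ_le hγ hp n) (hpos n).le
    rw [sum_range_succ γ (n + 1)]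
    linarith
  obtain ⟨B, hB⟩ := bddAbove_range_of_succ_le_add
    (a := fun n => (∑ i ∈ range (n + 1), γ i) * (‖(q n).1‖ ^ 2 - ‖z.1‖ ^ 2))
    (b := fun n => (ε (n + 1) / γ (n + 1)) ^ 2 * (∑ i ∈ range (n + 1), γ i)
      + γ (n + 1) * (‖(q (n + 1)).1‖ ^ 2 - ‖z.1‖ ^ 2))
    (fun n => add_nonneg (mul_nonneg (sq_nonneg _) (hpos n).le)
      (mul_nonneg (hγ (n + 1)).le (hnonneg (n + 1))))
    (hsq.add ((summable_nat_add_iff 1).2 hsum)) hstep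
  refine IsBigO.of_bound B (Eventually.of_forall fun n => ?_)
  rw [Real.norm_of_nonneg (hnonneg n), Real.norm_of_nonneg (inv_nonneg.2 (hpos n).le),
    ← div_eq_mul_inv, le_div_iff₀' (hpos n)]
  exact hB ⟨n, rfl⟩

theorem isBigO_div_of_isBigO_mul_sum (hγ : ∀ n, 0 < γ n)
    (hratio : (fun n => ε (n + 1) / γ n * ∑ i ∈ range (n + 1), γ i) =O[atTop] fun _ => (1 : ℝ)) :
    (fun n => ε (n + 1) / γ n) =O[atTop] fun n => (∑ i ∈ range (n + 1), γ i)⁻¹ := by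
  refine (hratio.mul (isBigO_refl (fun n => (∑ i ∈ range (n + 1), γ i)⁻¹) atTop)).congr
    (fun n => mul_inv_cancel_right₀ ?_ _) fun n => one_mul _
  exact (Finset.sum_pos (fun i _ => hγ i) Finset.nonempty_range_add_one).ne'

theorem isBigO_one_inv_sum (hdiv : Tendsto (fun n => ∑ i ∈ range n, γ i) atTop atTop) :
    (fun n => (∑ i ∈ range (n + 1), γ i)⁻¹) =O[atTop] fun _ => (1 : ℝ) :=
  (tendsto_inv_atTop_zero.comp ((tendsto_add_atTop_iff_nat 1).2 hdiv)).isBigO_one ℝ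

/-- The conditions on penalties `γ` and tolerances `ε` that drive the convergence rates. The
tolerance of the step with penalty `γ n` is `ε (n + 1)`. -/
structure IsAdmissible (γ ε : ℕ → ℝ) : Prop where
  penalty_pos (n : ℕ) : 0 < γ n
  tolerance_nonneg (n : ℕ) : 0 ≤ ε n
  summable_tolerance : Summable ε
  isBigO_ratio_mul_sum :
    (fun n => ε (n + 1) / γ n * ∑ i ∈ range (n + 1), γ i) =O[atTop] fun _ => (1 : ℝ)
  summable_ratio_sq_mul_sum :
    Summable fun n => (ε (n + 1) / γ (n + 1)) ^ 2 * ∑ i ∈ range (n + 1), γ i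
  tendsto_sum_penalty : Tendsto (fun n => ∑ i ∈ range n, γ i) atTop atTop

theorem IsInexactALM.isBigO_norm_sq_sub [CompleteSpace Y] (hclosed : IsClosed D) (hD : Convex ℝ D)
    (hγε : IsAdmissible γ ε) (hp : IsInexactALM D γ ε lam p) (hz : z ∈ D)
    (hmin : ∀ w ∈ D, 0 ≤ ⟪z.1, w.1 - z.1⟫) :
    (fun n => ‖(p n).1‖ ^ 2 - ‖z.1‖ ^ 2)
      =O[atTop] fun n => (∑ i ∈ range (n + 1), γ i)⁻¹ := by
  obtain ⟨hγ, hε, hεsum, hratio, hsq, hdiv⟩ := hγε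
  obtain ⟨q, hq⟩ := hp.exists_isExactCompanion hclosed hD hγ hε
  obtain ⟨R, hR⟩ := hq.bddAbove_norm hγ hp hsq
  have hdist : (fun n => (p n).1 - (q n).1) =O[atTop] fun n => (∑ i ∈ range (n + 1), γ i)⁻¹ :=
    (IsBigO.of_norm_le (hq.norm_sub_le_div hγ)).trans (isBigO_div_of_isBigO_mul_sum hγ hratio)
  have hqO : (fun n => ‖(q n).1‖) =O[atTop] fun _ => (1 : ℝ) :=
    .of_bound R (.of_forall fun n => by simpa using hR ⟨n, rfl⟩)
  have hpO : (fun n => ‖(p n).1‖) =O[atTop] fun _ => (1 : ℝ) := by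
    simpa using ((hdist.trans (isBigO_one_inv_sum hdiv)).add hqO.of_norm_left).norm_left
  have hnorm : (fun n => ‖(p n).1‖ - ‖(q n).1‖) =O[atTop] fun n => (p n).1 - (q n).1 :=
    .of_bound' (.of_forall fun n => abs_norm_sub_norm_le _ _)
  have hdiff : (fun n => ‖(p n).1‖ ^ 2 - ‖(q n).1‖ ^ 2)
      =O[atTop] fun n => (∑ i ∈ range (n + 1), γ i)⁻¹ :=
    ((hnorm.trans hdist).mul (hpO.add hqO)).congr (fun n => by ring) fun n => mul_one _
  exact (hdiff.add (hq.isBigO_norm_sq_sub hγ hε hp hz hmin hεsum hsq)).congr_left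
    fun n => sub_add_sub_cancel _ _ _

theorem IsInexactALM.norm_sub_sq_le (hp : IsInexactALM D γ ε lam p)
    (hmin : ∀ w ∈ D, 0 ≤ ⟪z.1, w.1 - z.1⟫) (n : ℕ) :
    ‖(p n).1 - z.1‖ ^ 2 ≤ ‖(p n).1‖ ^ 2 - ‖z.1‖ ^ 2 :=
  norm_sub_sq_le_of_inner_sub_nonneg (hmin _ (hp.mem n))

theorem IsInexactALM.multiplier_add_smul (hp : IsInexactALM D γ ε lam p) (s : Y) (n : ℕ) :
    lam n + (∑ i ∈ range n, γ i) • s = lam 0 - ∑ i ∈ range n, γ i • ((p i).1 - s) := by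
  induction n with
  | zero => simp
  | succ n ih =>
    rw [hp.lam_succ, sum_range_succ, sum_range_succ, add_smul, ← sub_sub, ← ih]
    module

theorem isBigO_inv_sqrt_of_sq_le {α F : Type*} [SeminormedAddCommGroup F] {L : Filter α}
    {u : α → F} {a g : α → ℝ} (hg : ∀ x, 0 ≤ g x) (hu : ∀ x, ‖u x‖ ^ 2 ≤ a x)
    (ha : a =O[L] fun x => (g x)⁻¹) : u =O[L] fun x => (√(g x))⁻¹ := by
  refine IsBigO.of_norm_left (IsBigO.of_pow two_ne_zero ?_)
  refine (IsBigO.of_norm_le fun x => ?_).trans (ha.congr_right fun x => ?_)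
  · simpa using hu x
  · simp [inv_pow, Real.sq_sqrt (hg x)]

theorem IsExactCompanion.isLittleO_multiplier (hγ : ∀ n, 0 < γ n) (hε : ∀ n, 0 ≤ ε n)
    (hp : IsInexactALM D γ ε lam p) (hq : IsExactCompanion D γ ε lam p q) (hz : z ∈ D)
    (hmin : ∀ w ∈ D, 0 ≤ ⟪z.1, w.1 - z.1⟫) (hεsum : Summable ε)
    (hsq : Summable fun n => (ε (n + 1) / γ (n + 1)) ^ 2 * ∑ i ∈ range (n + 1), γ i)
    (hdiv : Tendsto (fun n => ∑ i ∈ range n, γ i) atTop atTop) :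
    (fun n => lam n + (∑ i ∈ range n, γ i) • z.1)
      =o[atTop] fun n => √(∑ i ∈ range n, γ i) := by
  have hone : (fun _ : ℕ => (1 : ℝ)) =o[atTop] fun n => √(∑ i ∈ range n, γ i) :=
    isLittleO_const_left.2 (.inr
      (tendsto_norm_atTop_atTop.comp (Real.tendsto_sqrt_atTop.comp hdiv)))
  have hexact : (fun n => ∑ i ∈ range n, γ i • ((q i).1 - z.1))
      =o[atTop] fun n => √(∑ i ∈ range n, γ i) := by
    refine isLittleO_sum_smul_sqrt_sum (fun n => (hγ n).le) ?_ hdiv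
    refine (hq.summable_mul_norm_sq_sub hγ hε hp hz hmin hεsum hsq).of_nonneg_of_le
      (fun n => mul_nonneg (hγ n).le (sq_nonneg _)) fun n => ?_
    exact mul_le_mul_of_nonneg_left
      (norm_sub_sq_le_of_inner_sub_nonneg (hmin _ (hq.mem n))) (hγ n).le
  have hinexact : (fun n => lam 0 - ∑ i ∈ range n, γ i • ((p i).1 - (q i).1))
      =O[atTop] fun _ => (1 : ℝ) := by
    refine .of_bound (‖lam 0‖ + ∑' i, ε (i + 1)) (.of_forall fun n => ?_)
    rw [norm_one, mul_one]
    refine (norm_sub_le _ _).trans (add_le_add le_rfl ((norm_sum_le_of_le _ fun i _ => ?_).trans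
      (((summable_nat_add_iff 1).2 hεsum).sum_le_tsum (range n) fun i _ => hε (i + 1))))
    rw [norm_smul, Real.norm_of_nonneg (hγ i).le]
    exact hq.mul_norm_sub_le i
  refine ((hinexact.trans_isLittleO hone).sub hexact).congr_left fun n => ?_
  rw [hp.multiplier_add_smul, sub_sub, ← Finset.sum_add_distrib]
  simp only [← smul_add, sub_add_sub_cancel]

/-- Optimality of `p n` tested against `z`. Trading `lam n` for `lam n + t • z.1` is free because
`0 ≤ ⟪z.1, (p n).1 - z.1⟫`, and it makes the bound decay when `t` is the sum of the penalties. -/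
theorem IsInexactALM.snd_sub_le (hγ : ∀ n, 0 < γ n) (hp : IsInexactALM D γ ε lam p) (hz : z ∈ D)
    (hmin : ∀ w ∈ D, 0 ≤ ⟪z.1, w.1 - z.1⟫) {t : ℝ} (ht : 0 ≤ t) (n : ℕ) :
    (p n).2 - z.2 ≤ ‖lam n + t • z.1‖ * ‖(p n).1 - z.1‖ + ε (n + 1) ^ 2 / (2 * γ n) := by
  have hopt := hp.augLagrangian_le n z hz
  have hinner := hmin _ (hp.mem n)
  have hsq := mul_nonneg (half_pos (hγ n)).le
    ((sq_nonneg _).trans (hp.norm_sub_sq_le hmin n))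
  have hcs := real_inner_le_norm (lam n + t • z.1) ((p n).1 - z.1)
  have hfree := mul_nonneg ht hinner
  rw [inner_add_left, real_inner_smul_left, inner_sub_right (lam n)] at hcs
  simp only [augLagrangian, lagrangian] at hopt
  linarith

theorem IsInexactALM.eventually_snd_lt [CompleteSpace Y] (hclosed : IsClosed D) (hD : Convex ℝ D)
    (hγε : IsAdmissible γ ε) (hp : IsInexactALM D γ ε lam p) (hz : z ∈ D)
    (hmin : ∀ w ∈ D, 0 ≤ ⟪z.1, w.1 - z.1⟫) {t : ℝ} (ht : z.2 < t) :
    ∀ᶠ n in atTop, (p n).2 < t := by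
  have ⟨hγ, hε, hεsum, hratio, hsq, hdiv⟩ := hγε
  obtain ⟨q, hq⟩ := hp.exists_isExactCompanion hclosed hD hγ hε
  have hpos (n : ℕ) : 0 ≤ ∑ i ∈ range n, γ i := sum_nonneg fun i _ => (hγ i).le
  have hmult : (fun n => lam n + (∑ i ∈ range n, γ i) • z.1)
      =o[atTop] fun n => √(∑ i ∈ range (n + 1), γ i) := by
    refine (hq.isLittleO_multiplier hγ hε hp hz hmin hεsum hsq hdiv).trans_le fun n => ?_
    rw [Real.norm_of_nonneg (Real.sqrt_nonneg _), Real.norm_of_nonneg (Real.sqrt_nonneg _),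
      sum_range_succ]
    exact Real.sqrt_le_sqrt (le_add_of_nonneg_right (hγ n).le)
  have hres : (fun n => (p n).1 - z.1) =O[atTop] fun n => (√(∑ i ∈ range (n + 1), γ i))⁻¹ :=
    isBigO_inv_sqrt_of_sq_le (fun n => hpos (n + 1)) (hp.norm_sub_sq_le hmin)
      (hp.isBigO_norm_sq_sub hclosed hD hγε hz hmin)
  have hprod : Tendsto (fun n => ‖lam n + (∑ i ∈ range n, γ i) • z.1‖ * ‖(p n).1 - z.1‖) atTop
      (nhds 0) := by
    refine (isLittleO_one_iff ℝ).1
      ((hmult.norm_left.mul_isBigO hres.norm_left).trans_le fun n => ?_)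
    simpa using mul_inv_le_one
  have herr : Tendsto (fun n => ε (n + 1) ^ 2 / (2 * γ n)) atTop (nhds 0) := by
    have hε0 := (isLittleO_one_iff ℝ).2 ((summable_nat_add_iff 1).2 hεsum).tendsto_atTop_zero
    have hbdd := (isBigO_div_of_isBigO_mul_sum hγ hratio).trans (isBigO_one_inv_sum hdiv)
    have hlim := ((isLittleO_one_iff ℝ).1 ((hε0.mul_isBigO hbdd).congr_right fun _ => one_mul 1))
    rw [← zero_div (2 : ℝ)]
    exact (hlim.div_const 2).congr fun n => by ring
  have hlim := (hprod.add herr).add_const z.2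
  rw [add_zero, zero_add] at hlim
  filter_upwards [hlim.eventually_lt_const ht] with n hn
  linarith [hp.snd_sub_le hγ hz hmin (hpos n) n]

end InexactALM

section ValueFunction

variable {E Y : Type*} {f : E → EReal} {CC : Set (E × Y)}

/-- The real part of the epigraph of the value function, with the infimum replaced by feasible
points; it lies between the strict epigraph and the epigraph of `valueFn f CC`. -/
def valueEpigraph (f : E → EReal) (CC : Set (E × Y)) : Set (Y × ℝ) :=
  {p | ∃ x, (x, p.1) ∈ CC ∧ f x ≤ p.2}

theorem mem_valueEpigraph_of_valueFn_lt {s : Y} {t : ℝ} (h : valueFn f CC s < t) :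
    (s, t) ∈ valueEpigraph f CC := by
  simp only [valueFn, iInf_lt_iff] at h
  obtain ⟨x, hx, hfx⟩ := h
  exact ⟨x, hx, hfx.le⟩

theorem exists_mem_valueEpigraph {s : Y} (h : valueFn f CC s < ⊤) :
    ∃ t : ℝ, (s, t) ∈ valueEpigraph f CC := by
  obtain ⟨t, ht, -⟩ := EReal.lt_iff_exists_real_btwn.1 h
  exact ⟨t, mem_valueEpigraph_of_valueFn_lt ht⟩

theorem convex_setOf_exists_mem [AddCommGroup E] [Module ℝ E] [AddCommGroup Y] [Module ℝ Y]
    (hCC : Convex ℝ CC) : Convex ℝ {s | ∃ x, (x, s) ∈ CC} := by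
  rintro s₁ ⟨x₁, h₁⟩ s₂ ⟨x₂, h₂⟩ a b ha hb hab
  exact ⟨a • x₁ + b • x₂, hCC h₁ h₂ ha hb hab⟩

theorem convex_valueEpigraph [AddCommGroup E] [Module ℝ E] [AddCommGroup Y] [Module ℝ Y]
    (hf : ∀ x y : E, ∀ a b : ℝ, 0 ≤ a → 0 ≤ b → a + b = 1 →
      f (a • x + b • y) ≤ (a : EReal) * f x + (b : EReal) * f y)
    (hCC : Convex ℝ CC) : Convex ℝ (valueEpigraph f CC) := by
  rintro ⟨s₁, t₁⟩ ⟨x₁, hx₁, hf₁⟩ ⟨s₂, t₂⟩ ⟨x₂, hx₂, hf₂⟩ a b ha hb hab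
  refine ⟨a • x₁ + b • x₂, hCC hx₁ hx₂ ha hb hab, (hf x₁ x₂ a b ha hb hab).trans ?_⟩
  simp only [Prod.snd_add, Prod.smul_snd, smul_eq_mul, EReal.coe_add, EReal.coe_mul]
  exact add_le_add (mul_le_mul_of_nonneg_left hf₁ (EReal.coe_nonneg.2 ha))
    (mul_le_mul_of_nonneg_left hf₂ (EReal.coe_nonneg.2 hb))

theorem lowerSemicontinuousAt_valueFn_of_forall_mem_closure [TopologicalSpace Y] {s : Y}
    (h : ∀ t : ℝ, (s, t) ∈ closure (valueEpigraph f CC) → valueFn f CC s ≤ t) :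
    LowerSemicontinuousAt (valueFn f CC) s := by
  intro a ha
  by_contra hfreq
  obtain ⟨t, hat, hts⟩ := EReal.lt_iff_exists_real_btwn.1 ha
  have hmem : ∃ᶠ r in nhds s, (r, t) ∈ valueEpigraph f CC :=
    (not_eventually.1 hfreq).mono fun r hr =>
      mem_valueEpigraph_of_valueFn_lt ((not_lt.1 hr).trans_lt hat)
  refine hts.not_ge (h t (mem_closure_iff_frequently.2 ?_))
  exact ((Continuous.prodMk_left t).tendsto s).frequently hmem

theorem tendsto_valueFn_of_lowerSemicontinuousAt [TopologicalSpace Y] {ι : Type*} {L : Filter ι}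
    {x : ι → E} {s : ι → Y} {s₀ : Y} (hlsc : LowerSemicontinuousAt (valueFn f CC) s₀)
    (hmem : ∀ᶠ i in L, (x i, s i) ∈ CC) (hs : Tendsto s L (nhds s₀))
    (hupper : ∀ t : ℝ, valueFn f CC s₀ < t → ∀ᶠ i in L, f (x i) < t) :
    Tendsto (fun i => f (x i)) L (nhds (valueFn f CC s₀)) := by
  refine tendsto_order.2 ⟨fun a ha => ?_, fun a ha => ?_⟩
  · filter_upwards [hs.eventually (hlsc a ha), hmem] with i hi hxi
    exact hi.trans_le (iInf₂_le (x i) hxi)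
  · obtain ⟨t, ht, hta⟩ := EReal.lt_iff_exists_real_btwn.1 ha
    exact (hupper t ht).mono fun i hi => hi.trans hta

end ValueFunction

section Reduction

theorem isBigO_of_isBigO_succ {F G : Type*} [Norm F] [Norm G] {u : ℕ → F} {g : ℕ → G}
    (h : (fun n => u (n + 1)) =O[atTop] fun n => g (n + 1)) : u =O[atTop] g := by
  rw [← map_add_atTop_eq_nat 1]
  exact isBigO_map.2 h

theorem tendsto_one_div_sqrt_sum {γ : ℕ → ℝ}
    (hdiv : Tendsto (fun n => ∑ i ∈ Finset.range n, γ i) atTop atTop) :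
    Tendsto (fun n => 1 / √(∑ i ∈ Finset.range n, γ i)) atTop (nhds 0) :=
  (Real.tendsto_sqrt_atTop.comp hdiv).const_div_atTop 1

variable {E Y : Type*} [NormedAddCommGroup Y] [InnerProductSpace ℝ Y] {f : E → EReal}
  {CC : Set (E × Y)}

theorem inner_snd_sub_nonneg_of_forall_norm_le [AddCommGroup E] [Module ℝ E] (hCC : Convex ℝ CC)
    {s : Y} (hs : s ∈ closure {r | ∃ x, (x, r) ∈ CC})
    (hmin : ∀ r ∈ closure {r | ∃ x, (x, r) ∈ CC}, ‖s‖ ≤ ‖r‖) : ∀ p ∈ CC, 0 ≤ ⟪s, p.2 - s⟫ :=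
  fun p hp => inner_sub_nonneg_of_forall_norm_le (convex_setOf_exists_mem hCC).closure hs hmin
    (subset_closure ⟨p.1, hp⟩)

theorem inner_sub_nonneg_of_mem_closure_valueEpigraph {s : Y}
    (hmin : ∀ p ∈ CC, 0 ≤ ⟪s, p.2 - s⟫) : ∀ w ∈ closure (valueEpigraph f CC), 0 ≤ ⟪s, w.1 - s⟫ :=
  have hclosed : IsClosed {w : Y × ℝ | 0 ≤ ⟪s, w.1 - s⟫} := isClosed_le (by fun_prop) (by fun_prop)
  closure_minimal (fun _ ⟨_, hx, _⟩ => hmin _ hx) hclosed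

theorem iInf_add_le_of_mem_valueEpigraph (c : ℝ) (l : Y) {w : Y × ℝ}
    (hw : w ∈ valueEpigraph f CC) :
    (⨅ (p : E × Y) (_ : p ∈ CC), f p.1 - ((⟪l, p.2⟫ : ℝ) : EReal)
      + ((c / 2 * ‖p.2‖ ^ 2 : ℝ) : EReal)) ≤ (augLagrangian c l w : EReal) := by
  obtain ⟨x, hx, hfx⟩ := hw
  refine (iInf₂_le (x, w.1) hx).trans ?_
  rw [augLagrangian, lagrangian, EReal.coe_add, EReal.coe_sub]
  exact add_le_add_left (EReal.sub_le_sub hfx le_rfl) _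

theorem ne_top_of_augLagrangian_le (hne : (valueEpigraph f CC).Nonempty) {x : E} {s l : Y}
    {c e : ℝ}
    (hopt : f x - ((⟪l, s⟫ : ℝ) : EReal) + ((c / 2 * ‖s‖ ^ 2 : ℝ) : EReal)
      ≤ (⨅ (p : E × Y) (_ : p ∈ CC), f p.1 - ((⟪l, p.2⟫ : ℝ) : EReal)
          + ((c / 2 * ‖p.2‖ ^ 2 : ℝ) : EReal)) + (e : EReal)) : f x ≠ ⊤ := by
  obtain ⟨w, hw⟩ := hne
  intro htop
  have hle := hopt.trans (add_le_add_left (iInf_add_le_of_mem_valueEpigraph c l hw) _)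
  rw [htop, EReal.top_sub_coe, EReal.top_add_coe, ← EReal.coe_add] at hle
  exact EReal.coe_ne_top _ (top_le_iff.1 hle)

variable {γ ε : ℕ → ℝ} {lam : ℕ → Y} {x : ℕ → E} {s : ℕ → Y} {s₀ : Y} {t u : ℝ}

/-- The inexact augmented Lagrangian method for an extended-real objective `f` over `CC`. As in
`IsInexactALM`, the pair `(x n, s n)` is the outcome of step `n + 1`. -/
structure IsExtendedInexactALM (f : E → EReal) (CC : Set (E × Y)) (γ ε : ℕ → ℝ) (lam : ℕ → Y)
    (x : ℕ → E) (s : ℕ → Y) : Prop where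
  mem (n : ℕ) : (x n, s n) ∈ CC
  augLagrangian_le (n : ℕ) : f (x n) - ((⟪lam n, s n⟫ : ℝ) : EReal)
      + ((γ n / 2 * ‖s n‖ ^ 2 : ℝ) : EReal)
    ≤ (⨅ (p : E × Y) (_ : p ∈ CC), f p.1 - ((⟪lam n, p.2⟫ : ℝ) : EReal)
        + ((γ n / 2 * ‖p.2‖ ^ 2 : ℝ) : EReal)) + ((ε (n + 1) ^ 2 / (2 * γ n) : ℝ) : EReal)
  lam_succ (n : ℕ) : lam (n + 1) = lam n - γ n • s n

namespace IsExtendedInexactALM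

theorem isInexactALM (hrun : IsExtendedInexactALM f CC γ ε lam x s) (hbot : ∀ n, f (x n) ≠ ⊥)
    (hne : (valueEpigraph f CC).Nonempty) :
    IsInexactALM (valueEpigraph f CC) γ ε lam fun n => (s n, (f (x n)).toReal) :=
  have htop (n : ℕ) := ne_top_of_augLagrangian_le hne (hrun.augLagrangian_le n)
  { mem := fun n => ⟨x n, hrun.mem n, EReal.le_coe_toReal (htop n)⟩
    augLagrangian_le := fun n w hw => by
      have hle := (hrun.augLagrangian_le n).trans
        (add_le_add_left (iInf_add_le_of_mem_valueEpigraph _ _ hw) _)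
      rw [← EReal.coe_toReal (htop n) (hbot n)] at hle
      exact_mod_cast hle
    lam_succ := hrun.lam_succ }

variable [CompleteSpace Y]

theorem isBigO_norm_sq_sub (hrun : IsExtendedInexactALM f CC γ ε lam x s)
    (hγε : IsAdmissible γ ε) (hbot : ∀ n, f (x n) ≠ ⊥) (hD : Convex ℝ (valueEpigraph f CC))
    (hmin : ∀ p ∈ CC, 0 ≤ ⟪s₀, p.2 - s₀⟫)
    (ht : (s₀, t) ∈ closure (valueEpigraph f CC)) :
    (fun n => ‖s n‖ ^ 2 - ‖s₀‖ ^ 2) =O[atTop] fun n => (∑ i ∈ Finset.range (n + 1), γ i)⁻¹ :=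
  (hrun.isInexactALM hbot (closure_nonempty_iff.1 ⟨_, ht⟩)).closure.isBigO_norm_sq_sub
    isClosed_closure hD.closure hγε ht (inner_sub_nonneg_of_mem_closure_valueEpigraph hmin)

theorem eventually_lt (hrun : IsExtendedInexactALM f CC γ ε lam x s)
    (hγε : IsAdmissible γ ε) (hbot : ∀ n, f (x n) ≠ ⊥) (hD : Convex ℝ (valueEpigraph f CC))
    (hmin : ∀ p ∈ CC, 0 ≤ ⟪s₀, p.2 - s₀⟫)
    (ht : (s₀, t) ∈ closure (valueEpigraph f CC)) (htu : t < u) :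
    ∀ᶠ n in atTop, f (x n) < u := by
  have hne : (valueEpigraph f CC).Nonempty := closure_nonempty_iff.1 ⟨_, ht⟩
  filter_upwards [(hrun.isInexactALM hbot hne).closure.eventually_snd_lt isClosed_closure
    hD.closure hγε ht (inner_sub_nonneg_of_mem_closure_valueEpigraph hmin) htu] with n hn
  rw [← EReal.coe_toReal (ne_top_of_augLagrangian_le hne (hrun.augLagrangian_le n)) (hbot n)]
  exact_mod_cast hn

theorem isBigO_of_sq_le (hrun : IsExtendedInexactALM f CC γ ε lam x s)
    (hγε : IsAdmissible γ ε) (hbot : ∀ n, f (x n) ≠ ⊥) (hD : Convex ℝ (valueEpigraph f CC))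
    (hmin : ∀ p ∈ CC, 0 ≤ ⟪s₀, p.2 - s₀⟫) (hlt : valueFn f CC s₀ < ⊤)
    {F : Type*} [SeminormedAddCommGroup F] {v : ℕ → F}
    (hv : ∀ n, ‖v (n + 1)‖ ^ 2 ≤ ‖s n‖ ^ 2 - ‖s₀‖ ^ 2) :
    v =O[atTop] fun n => 1 / √(∑ i ∈ Finset.range n, γ i) := by
  obtain ⟨t, ht⟩ := exists_mem_valueEpigraph hlt
  simp only [one_div]
  exact isBigO_of_isBigO_succ (isBigO_inv_sqrt_of_sq_le
    (fun n => Finset.sum_nonneg fun i _ => (hγε.penalty_pos i).le) hv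
    (hrun.isBigO_norm_sq_sub hγε hbot hD hmin (subset_closure ht)))

theorem tendsto_valueFn_iff (hrun : IsExtendedInexactALM f CC γ ε lam x s)
    (hγε : IsAdmissible γ ε) (hbot : ∀ n, f (x n) ≠ ⊥) (hD : Convex ℝ (valueEpigraph f CC))
    (hmin : ∀ p ∈ CC, 0 ≤ ⟪s₀, p.2 - s₀⟫)
    (hs : Tendsto s atTop (nhds s₀)) :
    Tendsto (fun n => f (x n)) atTop (nhds (valueFn f CC s₀)) ↔
      LowerSemicontinuousAt (valueFn f CC) s₀ := by
  constructor
  · refine fun hlim => lowerSemicontinuousAt_valueFn_of_forall_mem_closure fun t ht => ?_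
    refine EReal.le_of_forall_lt_iff_le.1 fun u htu => ?_
    exact le_of_tendsto hlim ((hrun.eventually_lt hγε hbot hD hmin ht
      (EReal.coe_lt_coe_iff.1 htu)).mono fun n hn => hn.le)
  · refine fun hlsc => tendsto_valueFn_of_lowerSemicontinuousAt hlsc (.of_forall hrun.mem) hs ?_
    intro u hu
    obtain ⟨t, ht, htu⟩ := EReal.lt_iff_exists_real_btwn.1 hu
    exact hrun.eventually_lt hγε hbot hD hmin
      (subset_closure (mem_valueEpigraph_of_valueFn_lt ht)) (EReal.coe_lt_coe_iff.1 htu)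

end IsExtendedInexactALM

end Reduction

theorem statement12_general
    {E Y : Type*} [AddCommGroup E] [Module ℝ E]
    [NormedAddCommGroup Y] [InnerProductSpace ℝ Y] [CompleteSpace Y]
    (X : Set E) (K : Set Y) (hKcv : Convex ℝ K)
    (f : E → EReal)
    (hf_bot : ∀ x : E, f x ≠ ⊥)
    (hf_cvx : ∀ x y : E, ∀ a b : ℝ, 0 ≤ a → 0 ≤ b → a + b = 1 →
      f (a • x + b • y) ≤ (a : EReal) * f x + (b : EReal) * f y)
    (C : E → Y) (CC : Set (E × Y))
    (hCC : ∀ (x : E) (sv : Y), (x, sv) ∈ CC ↔ x ∈ X ∧ ∃ yv ∈ K, sv = C x - yv)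
    (hCCcv : Convex ℝ CC)
    (γ : ℕ → ℝ) (hγ : ∀ k : ℕ, 0 < γ k) (ε : ℕ → ℝ) (hε : ∀ k : ℕ, 0 ≤ ε k)
    (xs : ℕ → E) (ys : ℕ → Y) (ss : ℕ → Y) (lam : ℕ → Y)
    (hxs : ∀ k : ℕ, xs (k + 1) ∈ X) (hys : ∀ k : ℕ, ys (k + 1) ∈ K)
    (hss : ∀ k : ℕ, ss (k + 1) = C (xs (k + 1)) - ys (k + 1))
    (hopt : ∀ k : ℕ,
      f (xs (k + 1)) - ((⟪lam k, ss (k + 1)⟫ : ℝ) : EReal)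
          + ((γ k / 2 * ‖ss (k + 1)‖ ^ 2 : ℝ) : EReal)
        ≤ (⨅ (p : E × Y) (_ : p ∈ CC),
              f p.1 - ((⟪lam k, p.2⟫ : ℝ) : EReal)
                + ((γ k / 2 * ‖p.2‖ ^ 2 : ℝ) : EReal))
          + ((ε (k + 1) ^ 2 / (2 * γ k) : ℝ) : EReal))
    (hlam : ∀ k : ℕ, lam (k + 1) = lam k - γ k • ss (k + 1))
    (A1 : Summable ε)
    (A2 : (fun k : ℕ => ε (k + 1) / γ k * ∑ i ∈ Finset.range (k + 1), γ i)
        =O[atTop] fun _ => (1 : ℝ))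
    (A3 : Summable fun k : ℕ =>
      (ε (k + 1) / γ (k + 1)) ^ 2 * ∑ i ∈ Finset.range (k + 1), γ i)
    (A5 : Tendsto (fun n : ℕ => ∑ i ∈ Finset.range n, γ i) atTop atTop)
    (sbar : Y)
    (hsbar_mem : sbar ∈ closure {sv : Y | ∃ x : E, (x, sv) ∈ CC})
    (hsbar_min : ∀ sv ∈ closure {sv : Y | ∃ x : E, (x, sv) ∈ CC}, ‖sbar‖ ≤ ‖sv‖)
    (projK : Y → Y)
    (hprojK : ∀ v : Y, projK v ∈ K ∧ ∀ w ∈ K, ‖v - projK v‖ ≤ ‖v - w‖) :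
    ((valueFn f CC sbar ≠ ⊤ ∧
        Tendsto (fun k : ℕ => f (xs k)) atTop (nhds (valueFn f CC sbar)) ∧
        Tendsto (fun k : ℕ => C (xs k) - ys k) atTop (nhds sbar) ∧
        Tendsto (fun k : ℕ => ‖ys k - projK (C (xs k))‖) atTop (nhds 0))
      ↔ (LowerSemicontinuousAt (valueFn f CC) sbar ∧ valueFn f CC sbar < ⊤)) ∧
    (valueFn f CC sbar < ⊤ →
      ((fun k : ℕ => ‖C (xs k) - ys k - sbar‖) =O[atTop]
          fun k : ℕ => 1 / √(∑ i ∈ Finset.range k, γ i)) ∧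
      ((fun k : ℕ => ‖ys k - projK (C (xs k))‖) =O[atTop]
          fun k : ℕ => 1 / √(∑ i ∈ Finset.range k, γ i))) := by
  have hγε : IsAdmissible γ ε := ⟨hγ, hε, A1, A2, A3, A5⟩
  have hrun : IsExtendedInexactALM f CC γ ε lam (fun n => xs (n + 1)) fun n => ss (n + 1) :=
    ⟨fun n => (hCC _ _).2 ⟨hxs n, _, hys n, hss n⟩, hopt, hlam⟩
  have hD := convex_valueEpigraph hf_cvx hCCcv
  have hmin := inner_snd_sub_nonneg_of_forall_norm_le hCCcv hsbar_mem hsbar_min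
  have hresidual (n : ℕ) : ‖C (xs (n + 1)) - ys (n + 1) - sbar‖ ^ 2
      ≤ ‖ss (n + 1)‖ ^ 2 - ‖sbar‖ ^ 2 := by
    rw [← hss]
    exact norm_sub_sq_le_of_inner_sub_nonneg (hmin _ (hrun.mem n))
  have hproj (n : ℕ) : ‖ys (n + 1) - projK (C (xs (n + 1)))‖ ^ 2
      ≤ ‖ss (n + 1)‖ ^ 2 - ‖sbar‖ ^ 2 := by
    obtain ⟨hprojmem, hprojmin⟩ := hprojK (C (xs (n + 1)))
    have hsbar : ‖sbar‖ ≤ ‖C (xs (n + 1)) - projK (C (xs (n + 1)))‖ :=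
      hsbar_min _ (subset_closure ⟨_, (hCC _ _).2 ⟨hxs n, _, hprojmem, rfl⟩⟩)
    rw [hss]
    exact (norm_sub_sq_le_of_forall_norm_sub_le hKcv hprojmem hprojmin (hys n)).trans (by gcongr)
  have hrate (h : valueFn f CC sbar < ⊤) {v : ℕ → Y}
      (hv : ∀ n, ‖v (n + 1)‖ ^ 2 ≤ ‖ss (n + 1)‖ ^ 2 - ‖sbar‖ ^ 2) :
      (fun n => ‖v n‖) =O[atTop] fun n => 1 / √(∑ i ∈ Finset.range n, γ i) :=
    (hrun.isBigO_of_sq_le hγε (fun n => hf_bot _) hD hmin h hv).norm_left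
  have hrates (h : valueFn f CC sbar < ⊤) :=
    And.intro (hrate h (v := fun k => C (xs k) - ys k - sbar) hresidual)
      (hrate h (v := fun k => ys k - projK (C (xs k))) hproj)
  have hlimit (hs : Tendsto (fun k => C (xs k) - ys k) atTop (nhds sbar)) :
      Tendsto (fun k => f (xs k)) atTop (nhds (valueFn f CC sbar)) ↔
        LowerSemicontinuousAt (valueFn f CC) sbar := by
    rw [← tendsto_add_atTop_iff_nat 1] at hs ⊢
    exact hrun.tendsto_valueFn_iff hγε (fun n => hf_bot _) hD hmin (by simpa only [hss] using hs)
  refine ⟨⟨fun ⟨hne, hf, hs, _⟩ => ⟨(hlimit hs).1 hf, hne.lt_top⟩, fun ⟨hlsc, hlt⟩ => ?_⟩, hrates⟩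
  have hzero := tendsto_one_div_sqrt_sum A5
  have hs := tendsto_iff_norm_sub_tendsto_zero.2 ((hrates hlt).1.trans_tendsto hzero)
  exact ⟨hlt.ne, (hlimit hs).2 hlsc, hs, (hrates hlt).2.trans_tendsto hzero⟩

theorem statement12
    {E Y : Type*}
    [NormedAddCommGroup E] [InnerProductSpace ℝ E] [CompleteSpace E]
    [NormedAddCommGroup Y] [InnerProductSpace ℝ Y] [CompleteSpace Y]
    (X : Set E) (hXne : X.Nonempty) (hXcl : IsClosed X) (hXcv : Convex ℝ X)
    (K : Set Y) (hKne : K.Nonempty) (hKcl : IsClosed K) (hKcv : Convex ℝ K)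
    (f : E → EReal)
    (hf_bot : ∀ x : E, f x ≠ ⊥) (hf_top : ∃ x ∈ X, f x ≠ ⊤)
    (hf_dom : ∀ x : E, x ∉ X → f x = ⊤)
    (hf_lsc : LowerSemicontinuous f)
    (hf_cvx : ∀ x y : E, ∀ a b : ℝ, 0 ≤ a → 0 ≤ b → a + b = 1 →
      f (a • x + b • y) ≤ (a : EReal) * f x + (b : EReal) * f y)
    (C : E → Y) (CC : Set (E × Y))
    (hCC : ∀ (x : E) (sv : Y), (x, sv) ∈ CC ↔ x ∈ X ∧ ∃ yv ∈ K, sv = C x - yv)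
    (hCCne : CC.Nonempty) (hCCcl : IsClosed CC) (hCCcv : Convex ℝ CC)
    (hnu_bot : ∀ sv : Y, valueFn f CC sv ≠ ⊥)
    (γ : ℕ → ℝ) (hγ : ∀ k : ℕ, 0 < γ k) (ε : ℕ → ℝ) (hε : ∀ k : ℕ, 0 ≤ ε k)
    (xs : ℕ → E) (ys : ℕ → Y) (ss : ℕ → Y) (lam : ℕ → Y)
    (hxs : ∀ k : ℕ, xs (k+1) ∈ X) (hys : ∀ k : ℕ, ys (k+1) ∈ K)
    (hss : ∀ k : ℕ, ss (k+1) = C (xs (k+1)) - ys (k+1))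
    (hopt : ∀ k : ℕ,
      f (xs (k+1)) - ((⟪lam k, ss (k+1)⟫ : ℝ) : EReal)
          + ((γ k / 2 * ‖ss (k+1)‖ ^ 2 : ℝ) : EReal)
        ≤ (⨅ (p : E × Y) (_ : p ∈ CC),
              f p.1 - ((⟪lam k, p.2⟫ : ℝ) : EReal)
                + ((γ k / 2 * ‖p.2‖ ^ 2 : ℝ) : EReal))
          + ((ε (k+1) ^ 2 / (2 * γ k) : ℝ) : EReal))
    (hlam : ∀ k : ℕ, lam (k+1) = lam k - γ k • ss (k+1))
    (A1 : Summable ε)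
    (A2 : (fun k : ℕ => ε (k+1) / γ k * ∑ i ∈ Finset.range (k+1), γ i)
        =O[atTop] fun k : ℕ => 1 / Real.sqrt (∑ i ∈ Finset.range (k+1), γ i))
    (A3 : Summable fun k : ℕ => (ε (k+1) / γ (k+1)) ^ 2 * ∑ i ∈ Finset.range (k+1), γ i)
    (A4 : Summable fun k : ℕ => ε (k+1) / γ (k+1) * ∑ i ∈ Finset.range (k+1), γ i)
    (A5 : Tendsto (fun n : ℕ => ∑ i ∈ Finset.range n, γ i) atTop atTop)
    (sbar : Y)
    (hsbar_mem : sbar ∈ closure {sv : Y | ∃ x : E, (x, sv) ∈ CC})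
    (hsbar_min : ∀ sv ∈ closure {sv : Y | ∃ x : E, (x, sv) ∈ CC}, ‖sbar‖ ≤ ‖sv‖)
    (projK : Y → Y)
    (hprojK : ∀ v : Y, projK v ∈ K ∧ ∀ w ∈ K, ‖v - projK v‖ ≤ ‖v - w‖)
    :
    ((valueFn f CC sbar ≠ ⊤ ∧
        Tendsto (fun k : ℕ => f (xs k)) atTop (nhds (valueFn f CC sbar)) ∧
        Tendsto (fun k : ℕ => C (xs k) - ys k) atTop (nhds sbar) ∧
        Tendsto (fun k : ℕ => ‖ys k - projK (C (xs k))‖) atTop (nhds 0))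
      ↔ (LowerSemicontinuousAt (valueFn f CC) sbar ∧ valueFn f CC sbar < ⊤)) ∧
    (LowerSemicontinuousAt (valueFn f CC) sbar → valueFn f CC sbar < ⊤ →
      ((fun k : ℕ => ‖C (xs k) - ys k - sbar‖) =O[atTop]
          fun k : ℕ => 1 / Real.sqrt (∑ i ∈ Finset.range k, γ i)) ∧
      ((fun k : ℕ => ‖ys k - projK (C (xs k))‖) =O[atTop]
          fun k : ℕ => 1 / Real.sqrt (∑ i ∈ Finset.range k, γ i))) := by
  have hratio := A2.trans
    (((tendsto_add_atTop_iff_nat 1).2 (tendsto_one_div_sqrt_sum A5)).isBigO_one ℝ)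
  have ⟨hiff, hrates⟩ := statement12_general X K hKcv f hf_bot hf_cvx C CC hCC hCCcv γ hγ ε hε xs ys
    ss lam hxs hys hss hopt hlam A1 hratio A3 A5 sbar hsbar_mem hsbar_min projK hprojK
  exact ⟨hiff, fun _ => hrates⟩
end
end
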